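/- arXiv:1206.0411 — 2 statements merged into one kernel-verified Lean document; each statement's English description precedes it below -/
import Mathlib

section
/- Every cyclic subgroup of Ree(q) of order q − 1 is conjugate in Ree(q) to H(q). -/
open Matrix

set_option linter.unusedSectionVars false

noncomputable section

namespace ReePaper

variable {F : Type*} [Field F] [Fintype F]

/-- The matrix `α(x)`. -/
def amat (t : ℕ) (x : F) : Matrix (Fin 7) (Fin 7) F :=
  !![1, x^t, 0, 0, -x^(3*t+1), -x^(3*t+2), x^(4*t+2);
     0, 1, x, x^(t+1), -x^(2*t+1), 0, -x^(3*t+2);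
     0, 0, 1, x^t, -x^(2*t), 0, x^(3*t+1);
     0, 0, 0, 1, x^t, 0, 0;
     0, 0, 0, 0, 1, -x, x^(t+1);
     0, 0, 0, 0, 0, 1, -x^t;
     0, 0, 0, 0, 0, 0, 1]

/-- The matrix `β(x)`. -/
def bmat (t : ℕ) (x : F) : Matrix (Fin 7) (Fin 7) F :=
  !![1, 0, -x^t, 0, -x, 0, -x^(t+1);
     0, 1, 0, x^t, 0, -x^(2*t), 0;
     0, 0, 1, 0, 0, 0, x;
     0, 0, 0, 1, 0, x^t, 0;
     0, 0, 0, 0, 1, 0, x^t;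
     0, 0, 0, 0, 0, 1, 0;
     0, 0, 0, 0, 0, 0, 1]

/-- The matrix `γ(x)`. -/
def cmat (t : ℕ) (x : F) : Matrix (Fin 7) (Fin 7) F :=
  !![1, 0, 0, -x^t, 0, -x, -x^(2*t);
     0, 1, 0, 0, -x^t, 0, x;
     0, 0, 1, 0, 0, x^t, 0;
     0, 0, 0, 1, 0, 0, -x^t;
     0, 0, 0, 0, 1, 0, 0;
     0, 0, 0, 0, 0, 1, 0;
     0, 0, 0, 0, 0, 0, 1]

/-- The diagonal matrix `h(λ)`. -/
def hmat (t : ℕ) (l : Fˣ) : Matrix (Fin 7) (Fin 7) F :=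
  Matrix.diagonal ![((l ^ (t : ℤ) : Fˣ) : F), ((l ^ (1 - (t : ℤ)) : Fˣ) : F),
    ((l ^ (2 * (t : ℤ) - 1) : Fˣ) : F), 1, ((l ^ (1 - 2 * (t : ℤ)) : Fˣ) : F),
    ((l ^ ((t : ℤ) - 1) : Fˣ) : F), ((l ^ (-(t : ℤ)) : Fˣ) : F)]

/-- The matrix `Υ`, the antidiagonal matrix with all entries `-1`. -/
def ups : Matrix (Fin 7) (Fin 7) F :=
  !![0, 0, 0, 0, 0, 0, -1;
     0, 0, 0, 0, 0, -1, 0;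
     0, 0, 0, 0, -1, 0, 0;
     0, 0, 0, -1, 0, 0, 0;
     0, 0, -1, 0, 0, 0, 0;
     0, -1, 0, 0, 0, 0, 0;
     -1, 0, 0, 0, 0, 0, 0]

/-- `S(a, b, c) = α(a) β(b) γ(c)`. -/
def Smat (t : ℕ) (a b c : F) : Matrix (Fin 7) (Fin 7) F :=
  amat t a * bmat t b * cmat t c

/-- The Ree group `Ree(q) = ⟨α(x), β(x), γ(x), h(λ), Υ⟩ ≤ GL(7, q)`. -/
def ReeGroup (t : ℕ) : Subgroup (GL (Fin 7) F) :=
  Subgroup.closure {g : GL (Fin 7) F |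
    (∃ x : F, (g : Matrix (Fin 7) (Fin 7) F) = amat t x) ∨
    (∃ x : F, (g : Matrix (Fin 7) (Fin 7) F) = bmat t x) ∨
    (∃ x : F, (g : Matrix (Fin 7) (Fin 7) F) = cmat t x) ∨
    (∃ l : Fˣ, (g : Matrix (Fin 7) (Fin 7) F) = hmat t l) ∨
    (g : Matrix (Fin 7) (Fin 7) F) = ups}

/-- The subgroup `U(q) = ⟨α(x), β(x), γ(x)⟩`. -/
def Usub (t : ℕ) : Subgroup (GL (Fin 7) F) :=
  Subgroup.closure {g : GL (Fin 7) F |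
    (∃ x : F, (g : Matrix (Fin 7) (Fin 7) F) = amat t x) ∨
    (∃ x : F, (g : Matrix (Fin 7) (Fin 7) F) = bmat t x) ∨
    (∃ x : F, (g : Matrix (Fin 7) (Fin 7) F) = cmat t x)}

/-- The subgroup `H(q) = {h(λ) : λ ∈ F_q^×}`. -/
def Hsub (t : ℕ) : Subgroup (GL (Fin 7) F) :=
  Subgroup.closure {g : GL (Fin 7) F |
    ∃ l : Fˣ, (g : Matrix (Fin 7) (Fin 7) F) = hmat t l}

end ReePaper


namespace ReePaper

section inv
variable {K : Type*} [Field K]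

/-- The invariant symmetric bilinear form. -/
def bil (x y : Fin 7 → K) : K :=
  x 0 * y 6 + x 6 * y 0 + x 1 * y 5 + x 5 * y 1 + x 2 * y 4 + x 4 * y 2 - x 3 * y 3

/-- The invariant cross product. -/
def crs (x y : Fin 7 → K) : Fin 7 → K :=
  ![(x 0 * y 3 - x 3 * y 0) + (x 1 * y 2 - x 2 * y 1),
    (x 0 * y 4 - x 4 * y 0) - (x 1 * y 3 - x 3 * y 1),
    - (x 0 * y 5 - x 5 * y 0) - (x 2 * y 3 - x 3 * y 2),
    (x 0 * y 6 - x 6 * y 0) - (x 1 * y 5 - x 5 * y 1) - (x 2 * y 4 - x 4 * y 2),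
    - (x 1 * y 6 - x 6 * y 1) - (x 3 * y 4 - x 4 * y 3),
    (x 2 * y 6 - x 6 * y 2) - (x 3 * y 5 - x 5 * y 3),
    (x 4 * y 5 - x 5 * y 4) + (x 3 * y 6 - x 6 * y 3)]

/-- The twisted partial product. -/
def twp (x y : Fin 7 → K) : Fin 7 → K :=
  ![x 0 * y 1 - x 1 * y 0,
    x 0 * y 2 - x 2 * y 0,
    - (x 1 * y 4 - x 4 * y 1),
    (x 1 * y 5 - x 5 * y 1) - (x 2 * y 4 - x 4 * y 2),
    - (x 2 * y 5 - x 5 * y 2),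
    x 4 * y 6 - x 6 * y 4,
    x 5 * y 6 - x 6 * y 5]

/-- `M` preserves the form, the cross product, and the twisted product, with a twist. -/
structure Good (M M' : Matrix (Fin 7) (Fin 7) K) : Prop where
  bil : ∀ x y, bil (M *ᵥ x) (M *ᵥ y) = bil x y
  crs : ∀ x y, crs (M *ᵥ x) (M *ᵥ y) = M *ᵥ crs x y
  twp : ∀ x y, ReePaper.crs x y = 0 → twp (M *ᵥ x) (M *ᵥ y) = M' *ᵥ twp x y

/-- Generic version of `α`. -/
def aM (X Y : K) : Matrix (Fin 7) (Fin 7) K :=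
  !![1, Y, 0, 0, -(X*Y^3), -(X^2*Y^3), X^2*Y^4;
     0, 1, X, X*Y, -(X*Y^2), 0, -(X^2*Y^3);
     0, 0, 1, Y, -Y^2, 0, X*Y^3;
     0, 0, 0, 1, Y, 0, 0;
     0, 0, 0, 0, 1, -X, X*Y;
     0, 0, 0, 0, 0, 1, -Y;
     0, 0, 0, 0, 0, 0, 1]

/-- Generic version of `β`. -/
def bM (X Y : K) : Matrix (Fin 7) (Fin 7) K :=
  !![1, 0, -Y, 0, -X, 0, -(X*Y);
     0, 1, 0, Y, 0, -Y^2, 0;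
     0, 0, 1, 0, 0, 0, X;
     0, 0, 0, 1, 0, Y, 0;
     0, 0, 0, 0, 1, 0, Y;
     0, 0, 0, 0, 0, 1, 0;
     0, 0, 0, 0, 0, 0, 1]

/-- Generic version of `γ`. -/
def cM (X Y : K) : Matrix (Fin 7) (Fin 7) K :=
  !![1, 0, 0, -Y, 0, -X, -Y^2;
     0, 1, 0, 0, -Y, 0, X;
     0, 0, 1, 0, 0, Y, 0;
     0, 0, 0, 1, 0, 0, -Y;
     0, 0, 0, 0, 1, 0, 0;
     0, 0, 0, 0, 0, 1, 0;
     0, 0, 0, 0, 0, 0, 1]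

lemma aM_mulVec (X Y : K) (v : Fin 7 → K) : aM X Y *ᵥ v =
    ![v 0 + Y * v 1 - X*Y^3 * v 4 - X^2*Y^3 * v 5 + X^2*Y^4 * v 6,
      v 1 + X * v 2 + X*Y * v 3 - X*Y^2 * v 4 - X^2*Y^3 * v 6,
      v 2 + Y * v 3 - Y^2 * v 4 + X*Y^3 * v 6,
      v 3 + Y * v 4,
      v 4 - X * v 5 + X*Y * v 6,
      v 5 - Y * v 6,
      v 6] := by
  funext k
  fin_cases k <;> simp [aM, Matrix.mulVec, dotProduct, Fin.sum_univ_succ, Fin.succ, Matrix.of_apply] <;> ring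

lemma bM_mulVec (X Y : K) (v : Fin 7 → K) : bM X Y *ᵥ v =
    ![v 0 - Y * v 2 - X * v 4 - X*Y * v 6,
      v 1 + Y * v 3 - Y^2 * v 5,
      v 2 + X * v 6,
      v 3 + Y * v 5,
      v 4 + Y * v 6,
      v 5,
      v 6] := by
  funext k
  fin_cases k <;> simp [bM, Matrix.mulVec, dotProduct, Fin.sum_univ_succ, Fin.succ, Matrix.of_apply] <;> ring

lemma cM_mulVec (X Y : K) (v : Fin 7 → K) : cM X Y *ᵥ v =
    ![v 0 - Y * v 3 - X * v 5 - Y^2 * v 6,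
      v 1 - Y * v 4 + X * v 6,
      v 2 + Y * v 5,
      v 3 - Y * v 6,
      v 4,
      v 5,
      v 6] := by
  funext k
  fin_cases k <;> simp [cM, Matrix.mulVec, dotProduct, Fin.sum_univ_succ, Fin.succ, Matrix.of_apply] <;> ring

lemma ups_mulVec (v : Fin 7 → K) : (ups : Matrix (Fin 7) (Fin 7) K) *ᵥ v =
    ![- v 6, - v 5, - v 4, - v 3, - v 2, - v 1, - v 0] := by
  funext k
  fin_cases k <;> simp [ups, Matrix.mulVec, dotProduct, Fin.sum_univ_succ, Fin.succ, Matrix.of_apply]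

lemma vec7_zero {a b c d e f g : K} (h : ![a, b, c, d, e, f, g] = 0) :
    a = 0 ∧ b = 0 ∧ c = 0 ∧ d = 0 ∧ e = 0 ∧ f = 0 ∧ g = 0 :=
  ⟨congrFun h 0, congrFun h 1, congrFun h 2, congrFun h 3, congrFun h 4, congrFun h 5,
    congrFun h 6⟩

lemma vec7_eq {a b c d e f g : K} {v : Fin 7 → K} (h0 : a = v 0) (h1 : b = v 1) (h2 : c = v 2)
    (h3 : d = v 3) (h4 : e = v 4) (h5 : f = v 5) (h6 : g = v 6) :
    ![a, b, c, d, e, f, g] = v := by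
  funext k
  fin_cases k <;> assumption

variable [CharP K 3]

lemma good_aM (X Y : K) : Good (aM X Y) (aM (Y^3) X) := by
  constructor
  · intro x y
    rw [aM_mulVec, aM_mulVec]
    simp only [bil, Matrix.cons_val]
    grind
  · intro x y
    rw [aM_mulVec, aM_mulVec, aM_mulVec]
    apply vec7_eq <;> simp only [crs, Matrix.cons_val] <;> grind
  · intro x y h
    rw [aM_mulVec, aM_mulVec, aM_mulVec]
    obtain ⟨h1, h2, h3, h4, h5, h6, h7⟩ := vec7_zero h
    apply vec7_eq <;> simp only [twp, Matrix.cons_val]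
    · grind
    · grind
    · grind
    · grind
    · grind
    · grind
    · grind

lemma good_bM (X Y : K) : Good (bM X Y) (bM (Y^3) X) := by
  constructor
  · intro x y
    rw [bM_mulVec, bM_mulVec]
    simp only [bil, Matrix.cons_val]
    grind
  · intro x y
    rw [bM_mulVec, bM_mulVec, bM_mulVec]
    apply vec7_eq <;> simp only [crs, Matrix.cons_val] <;> grind
  · intro x y h
    rw [bM_mulVec, bM_mulVec, bM_mulVec]
    obtain ⟨h1, h2, h3, h4, h5, h6, h7⟩ := vec7_zero h
    apply vec7_eq <;> simp only [twp, Matrix.cons_val] <;> grind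

lemma good_cM (X Y : K) : Good (cM X Y) (cM (Y^3) X) := by
  constructor
  · intro x y
    rw [cM_mulVec, cM_mulVec]
    simp only [bil, Matrix.cons_val]
    grind
  · intro x y
    rw [cM_mulVec, cM_mulVec, cM_mulVec]
    apply vec7_eq <;> simp only [crs, Matrix.cons_val] <;> grind
  · intro x y h
    rw [cM_mulVec, cM_mulVec, cM_mulVec]
    obtain ⟨h1, h2, h3, h4, h5, h6, h7⟩ := vec7_zero h
    apply vec7_eq <;> simp only [twp, Matrix.cons_val] <;> grind

lemma good_ups : Good (ups : Matrix (Fin 7) (Fin 7) K) ups := by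
  constructor
  · intro x y
    rw [ups_mulVec, ups_mulVec]
    simp only [bil, Matrix.cons_val]
    grind
  · intro x y
    rw [ups_mulVec, ups_mulVec, ups_mulVec]
    apply vec7_eq <;> simp only [crs, Matrix.cons_val] <;> grind
  · intro x y h
    rw [ups_mulVec, ups_mulVec, ups_mulVec]
    obtain ⟨h1, h2, h3, h4, h5, h6, h7⟩ := vec7_zero h
    apply vec7_eq <;> simp only [twp, Matrix.cons_val] <;> grind

lemma diag_mulVec (d v : Fin 7 → K) : Matrix.diagonal d *ᵥ v =
    ![d 0 * v 0, d 1 * v 1, d 2 * v 2, d 3 * v 3, d 4 * v 4, d 5 * v 5, d 6 * v 6] := by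
  funext k
  rw [Matrix.mulVec_diagonal]
  fin_cases k <;> rfl

/-- The generic diagonal matrix. -/
def dM (p q : K) : Matrix (Fin 7) (Fin 7) K :=
  Matrix.diagonal ![p, q, p * q⁻¹, 1, q * p⁻¹, q⁻¹, p⁻¹]

lemma good_dM (p q : K) (hp : p ≠ 0) (hq : q ≠ 0) : Good (dM p q) (dM (p * q) (p ^ 2 * q⁻¹)) := by
  constructor
  · intro x y
    rw [dM, diag_mulVec, diag_mulVec]
    simp only [bil, Matrix.cons_val]
    field_simp
  · intro x y
    rw [dM, diag_mulVec, diag_mulVec, diag_mulVec]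
    apply vec7_eq <;> simp only [crs, Matrix.cons_val] <;> field_simp
  · intro x y h
    rw [dM, dM, diag_mulVec, diag_mulVec, diag_mulVec]
    apply vec7_eq <;> simp only [twp, Matrix.cons_val] <;> field_simp

lemma good_mul {M M' N N' : Matrix (Fin 7) (Fin 7) K} (h : Good M M') (k : Good N N') :
    Good (M * N) (M' * N') := by
  constructor
  · intro x y
    rw [← Matrix.mulVec_mulVec, ← Matrix.mulVec_mulVec, h.bil, k.bil]
  · intro x y
    rw [← Matrix.mulVec_mulVec, ← Matrix.mulVec_mulVec, h.crs, k.crs, Matrix.mulVec_mulVec]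
  · intro x y hxy
    rw [← Matrix.mulVec_mulVec, ← Matrix.mulVec_mulVec, h.twp, k.twp _ _ hxy, Matrix.mulVec_mulVec]
    rw [k.crs, hxy, Matrix.mulVec_zero]

lemma good_one : Good (1 : Matrix (Fin 7) (Fin 7) K) 1 := by
  constructor <;> intros <;> simp

lemma good_inv {M M' N N' : Matrix (Fin 7) (Fin 7) K} (h : Good M M') (h1 : M * N = 1)
    (h2 : M' * N' = 1) : Good N N' := by
  have h1' : N * M = 1 := mul_eq_one_comm.mp h1
  have h2' : N' * M' = 1 := mul_eq_one_comm.mp h2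
  have key : ∀ x, M *ᵥ (N *ᵥ x) = x := fun x => by
    rw [Matrix.mulVec_mulVec, h1, Matrix.one_mulVec]
  have key1 : ∀ x, N *ᵥ (M *ᵥ x) = x := fun x => by
    rw [Matrix.mulVec_mulVec, h1', Matrix.one_mulVec]
  have key2 : ∀ x, N' *ᵥ (M' *ᵥ x) = x := fun x => by
    rw [Matrix.mulVec_mulVec, h2', Matrix.one_mulVec]
  have hc : ∀ x y, ReePaper.crs (N *ᵥ x) (N *ᵥ y) = N *ᵥ ReePaper.crs x y := fun x y => by
    have := h.crs (N *ᵥ x) (N *ᵥ y)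
    rw [key, key] at this
    rw [this, key1]
  constructor
  · intro x y
    have := h.bil (N *ᵥ x) (N *ᵥ y)
    rw [key, key] at this
    exact this.symm
  · exact hc
  · intro x y hxy
    have := h.twp (N *ᵥ x) (N *ᵥ y) (by rw [hc, hxy, Matrix.mulVec_zero])
    rw [key, key] at this
    rw [this, key2]

/-- The cone over the Ree ovoid. -/
def Om (σ : K →+* K) (x : Fin 7 → K) : Prop :=
  x ≠ 0 ∧ bil x x = 0 ∧ ∃ y, crs x y = 0 ∧ twp x y = fun i => σ (x i)

/-- The point at infinity. -/
def e0 : Fin 7 → K := ![1, 0, 0, 0, 0, 0, 0]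
/-- The point zero. -/
def e6 : Fin 7 → K := ![0, 0, 0, 0, 0, 0, 1]

lemma om_mulVec {σ : K →+* K} {M : Matrix (Fin 7) (Fin 7) K} (h : Good M (M.map σ))
    (hM : IsUnit M) {x : Fin 7 → K} (hx : Om σ x) : Om σ (M *ᵥ x) := by
  obtain ⟨h0, h1, y, h2, h3⟩ := hx
  refine ⟨?_, ?_, M *ᵥ y, ?_, ?_⟩
  · intro h
    apply h0
    have := Matrix.mulVec_injective_of_isUnit hM
    apply this
    rw [h, Matrix.mulVec_zero]
  · rw [h.bil, h1]
  · rw [h.crs, h2, Matrix.mulVec_zero]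
  · rw [h.twp _ _ h2, h3]
    funext i
    exact (RingHom.map_mulVec σ M x i).symm

lemma om_e0 (σ : K →+* K) : Om σ e0 := by
  refine ⟨?_, ?_, ![0, 1, 0, 0, 0, 0, 0], ?_, ?_⟩
  · intro h
    simpa [e0] using congrFun h 0
  · simp [e0, bil]
  · funext i
    fin_cases i <;> simp [e0, crs]
  · funext i
    fin_cases i <;> simp [e0, twp]

lemma om_e6 (σ : K →+* K) : Om σ e6 := by
  refine ⟨?_, ?_, ![0, 0, 0, 0, 0, -1, 0], ?_, ?_⟩
  · intro h
    simpa [e6] using congrFun h 6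
  · simp [e6, bil]
  · funext i
    fin_cases i <;> simp [e6, crs]
  · funext i
    fin_cases i <;> simp [e6, twp]

lemma om_smul {σ : K →+* K} {x : Fin 7 → K} (hx : Om σ x) {k : K} (hk : k ≠ 0) :
    Om σ (k • x) := by
  obtain ⟨h0, h1, y, h2, h3⟩ := hx
  refine ⟨smul_ne_zero hk h0, ?_, (σ k * k⁻¹) • y, ?_, ?_⟩
  · have : bil (k • x) (k • x) = k ^ 2 * bil x x := by
      simp only [bil, Pi.smul_apply, smul_eq_mul]; ring
    rw [this, h1, mul_zero]
  · have : crs (k • x) ((σ k * k⁻¹) • y) = (k * (σ k * k⁻¹)) • crs x y := by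
      apply vec7_eq <;> simp [crs] <;> ring
    rw [this, h2, smul_zero]
  · have : twp (k • x) ((σ k * k⁻¹) • y) = (k * (σ k * k⁻¹)) • twp x y := by
      apply vec7_eq <;> simp [twp] <;> ring
    rw [this, h3]
    funext i
    simp only [Pi.smul_apply, smul_eq_mul, map_mul]
    field_simp

lemma om_inf {σ : K →+* K} {x : Fin 7 → K} (hx : Om σ x) (h6 : x 6 = 0) : x = x 0 • e0 := by
  obtain ⟨h0, h1, y, h2, h3⟩ := hx
  obtain ⟨c0, c1, c2, c3, c4, c5, c6⟩ := vec7_zero h2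
  have p0 := congrFun h3 0
  have p1 := congrFun h3 1
  have p2 := congrFun h3 2
  have p3 := congrFun h3 3
  have p4 := congrFun h3 4
  have p5 := congrFun h3 5
  have p6 := congrFun h3 6
  simp only [twp, Matrix.cons_val, h6, map_zero, zero_mul, mul_zero, sub_zero] at p0 p1 p2 p3 p4 p5 p6
  rw [h6] at c3 c4 c5 c6
  have z : ∀ a, σ a = 0 → a = 0 := fun a h => (map_eq_zero σ).mp h
  have h5 : x 5 = 0 := by
    by_contra hne
    apply hne
    apply z
    have : y 6 = 0 := by grind
    rw [← p5, this, mul_zero]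
  rw [h5] at c2 c3 c5 c6 p3 p4 p5
  have h4 : x 4 = 0 := by
    by_contra hne
    apply hne
    apply z
    have hy6 : y 6 = 0 := by grind
    have hy5 : y 5 = 0 := by grind
    grind
  rw [h4] at c1 c3 c4 c6 p2 p3 p4
  have h3 : x 3 = 0 := by
    simp only [bil, h6, h5, h4] at h1
    grind
  rw [h3] at c0 c1 c2 c4 c5 c6 p3
  have h2 : x 2 = 0 := by
    by_contra hne
    apply hne
    apply z
    have hy6 : y 6 = 0 := by grind
    have hy5 : y 5 = 0 := by simp at p4; grind
    have hy4 : y 4 = 0 := by grind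
    grind
  rw [h2] at c0 c2 c3 c5 p1 p2 p3 p4
  have h1 : x 1 = 0 := by
    by_contra hne
    apply hne
    apply z
    have hy6 : y 6 = 0 := by grind
    have hy5 : y 5 = 0 := by grind
    have hy4 : y 4 = 0 := by simp at p2; grind
    have hy3 : y 3 = 0 := by grind
    have hy2 : y 2 = 0 := by grind
    grind
  funext i
  fin_cases i <;> simp [e0, *]

lemma om_zero {σ : K →+* K} {x : Fin 7 → K} (hx : Om σ x) (h6 : x 6 ≠ 0) (h5 : x 5 = 0)
    (h4 : x 4 = 0) (h3 : x 3 = 0) : x = x 6 • e6 := by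
  obtain ⟨-, h1, y, h2, hs⟩ := hx
  have p3 := congrFun hs 3
  have p4 := congrFun hs 4
  have p6 := congrFun hs 6
  simp only [twp, Matrix.cons_val, h5, h4, h3, map_zero, zero_mul, mul_zero, sub_zero] at p3 p4 p6
  have n6 : σ (x 6) ≠ 0 := (map_ne_zero σ).mpr h6
  have hy : y 5 ≠ 0 := by
    intro h
    rw [h] at p6
    simp at p6
    exact n6 p6.symm
  have h2 : x 2 = 0 := by grind
  have h1' : x 1 = 0 := by grind
  have h0 : x 0 = 0 := by
    simp only [bil, h5, h4, h3] at h1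
    have : x 0 * x 6 = 0 := by grind
    grind
  funext i
  fin_cases i <;> simp [e6, *]

end inv
end ReePaper

namespace ReePaper

section inv2
variable {K : Type*} [Field K] [CharP K 3]

/-- An element fixing both base points is diagonal. -/
lemma good_fix {σ : K →+* K} {M : Matrix (Fin 7) (Fin 7) K} (h : Good M (M.map σ)) {p n : K}
    (h0 : M *ᵥ e0 = p • e0) (h6 : M *ᵥ e6 = n • e6) :
    ∃ q, p ≠ 0 ∧ q ≠ 0 ∧ p * q = σ p ∧ M = dM p q := by
  obtain ⟨v1, hv1⟩ : ∃ v, v = M *ᵥ ![0, 1, 0, 0, 0, 0, 0] := ⟨_, rfl⟩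
  obtain ⟨v5, hv5⟩ : ∃ v, v = M *ᵥ ![0, 0, 0, 0, 0, 1, 0] := ⟨_, rfl⟩
  have hs : ∀ v w : Fin 7 → K, M *ᵥ v = w → (M.map σ) *ᵥ (fun i => σ (v i)) = fun i => σ (w i) := by
    intro v w hvw
    rw [← hvw]
    funext i
    exact (RingHom.map_mulVec σ M v i).symm
  have hpn : p * n = 1 := by
    have := h.bil e0 e6
    rw [h0, h6] at this
    simpa [bil, e0, e6] using this
  have hp : p ≠ 0 := left_ne_zero_of_mul_eq_one hpn
  have hn : n ≠ 0 := right_ne_zero_of_mul_eq_one hpn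
  have c01 : crs (e0 : Fin 7 → K) ![0, 1, 0, 0, 0, 0, 0] = 0 := by
    apply vec7_eq <;> simp [e0]
  have c56 : crs ![0, 0, 0, 0, 0, 1, 0] (e6 : Fin 7 → K) = 0 := by
    apply vec7_eq <;> simp [e6]
  have t01 : twp (e0 : Fin 7 → K) ![0, 1, 0, 0, 0, 0, 0] = fun i => σ (e0 i) := by
    apply vec7_eq <;> simp [e0]
  have t56 : twp ![0, 0, 0, 0, 0, 1, 0] (e6 : Fin 7 → K) = fun i => σ (e6 i) := by
    apply vec7_eq <;> simp [e6]
  have a1 := h.crs e0 ![0, 1, 0, 0, 0, 0, 0]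
  rw [c01, Matrix.mulVec_zero, h0, ← hv1] at a1
  obtain ⟨a10, a11, a12, a13, -, -, -⟩ := vec7_zero a1
  have a2 := h.twp e0 ![0, 1, 0, 0, 0, 0, 0] c01
  rw [t01, hs _ _ h0, h0, ← hv1] at a2
  have a20 := congrFun a2 0
  have a21 := congrFun a2 1
  have a3 := h.bil ![0, 1, 0, 0, 0, 0, 0] e6
  rw [← hv1, h6] at a3
  simp [e0, hp] at a10 a11 a12 a13
  simp [e0, twp, hp] at a20 a21
  simp [e6, bil, hn] at a3
  have e1 : v1 = ![0, v1 1, 0, 0, 0, 0, 0] := by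
    symm; apply vec7_eq <;> simp [a10, a11, a12, a13, a21, a3]
  have b1 := h.crs ![0, 0, 0, 0, 0, 1, 0] e6
  rw [c56, Matrix.mulVec_zero, h6, ← hv5] at b1
  obtain ⟨-, -, -, b13, b14, b15, b16⟩ := vec7_zero b1
  have b2 := h.twp ![0, 0, 0, 0, 0, 1, 0] e6 c56
  rw [t56, hs _ _ h6, h6, ← hv5] at b2
  have b25 := congrFun b2 5
  have b3 := h.bil ![0, 0, 0, 0, 0, 1, 0] e0
  rw [← hv5, h0] at b3
  simp [e6, hn] at b13 b14 b15 b16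
  simp [e6, twp, hn] at b25
  simp [e0, bil, hp] at b3
  have e5 : v5 = ![0, 0, 0, 0, 0, v5 5, 0] := by
    symm; apply vec7_eq <;> simp [b13, b14, b15, b16, b25, b3]
  have hqs : v1 1 * v5 5 = 1 := by
    have := h.bil ![0, 1, 0, 0, 0, 0, 0] ![0, 0, 0, 0, 0, 1, 0]
    rw [← hv1, ← hv5, e1, e5] at this
    simpa [bil] using this
  have hq : v1 1 ≠ 0 := left_ne_zero_of_mul_eq_one hqs
  have hni : n = p⁻¹ := (inv_eq_of_mul_eq_one_right hpn).symm
  have hsi : v5 5 = (v1 1)⁻¹ := (inv_eq_of_mul_eq_one_right hqs).symm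
  refine ⟨v1 1, hp, hq, a20, ?_⟩
  have f3 : M *ᵥ ![0, 0, 0, 1, 0, 0, 0] = ![0, 0, 0, 1, 0, 0, 0] := by
    have := h.crs e0 e6
    rw [h0, h6] at this
    have l : crs (e0 : Fin 7 → K) e6 = ![0, 0, 0, 1, 0, 0, 0] := by
      apply vec7_eq <;> simp [e0, e6]
    rw [← l, ← this]
    apply vec7_eq <;> simp [crs, e0, e6, hpn]
  have f2 : M *ᵥ ![0, 0, 1, 0, 0, 0, 0] = ![0, 0, p * (v1 1)⁻¹, 0, 0, 0, 0] := by
    have := h.crs ![0, 0, 0, 0, 0, 1, 0] e0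
    rw [h0, ← hv5, e5] at this
    have l : crs ![0, 0, 0, 0, 0, 1, 0] (e0 : Fin 7 → K) = ![0, 0, 1, 0, 0, 0, 0] := by
      apply vec7_eq <;> simp [e0]
    rw [← l, ← this]
    symm
    apply vec7_eq <;> simp [crs, e0, hsi, mul_comm]
  have f4 : M *ᵥ ![0, 0, 0, 0, 1, 0, 0] = ![0, 0, 0, 0, v1 1 * p⁻¹, 0, 0] := by
    have := h.crs e6 ![0, 1, 0, 0, 0, 0, 0]
    rw [h6, ← hv1, e1] at this
    have l : crs (e6 : Fin 7 → K) ![0, 1, 0, 0, 0, 0, 0] = ![0, 0, 0, 0, 1, 0, 0] := by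
      apply vec7_eq <;> simp [e6]
    rw [← l, ← this]
    symm
    apply vec7_eq <;> simp [crs, e6, hni, mul_comm]
  rw [hni] at h6
  have col : ∀ i j, M i j = (M *ᵥ Pi.single j 1) i := fun i j => by
    rw [Matrix.mulVec_single_one]; rfl
  have s0 : (Pi.single 0 1 : Fin 7 → K) = e0 := by
    symm; apply vec7_eq <;> simp
  have s1 : (Pi.single 1 1 : Fin 7 → K) = ![0, 1, 0, 0, 0, 0, 0] := by
    symm; apply vec7_eq <;> simp
  have s2 : (Pi.single 2 1 : Fin 7 → K) = ![0, 0, 1, 0, 0, 0, 0] := by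
    symm; apply vec7_eq <;> simp
  have s3 : (Pi.single 3 1 : Fin 7 → K) = ![0, 0, 0, 1, 0, 0, 0] := by
    symm; apply vec7_eq <;> simp
  have s4 : (Pi.single 4 1 : Fin 7 → K) = ![0, 0, 0, 0, 1, 0, 0] := by
    symm; apply vec7_eq <;> simp
  have s5 : (Pi.single 5 1 : Fin 7 → K) = ![0, 0, 0, 0, 0, 1, 0] := by
    symm; apply vec7_eq <;> simp
  have s6 : (Pi.single 6 1 : Fin 7 → K) = e6 := by
    symm; apply vec7_eq <;> simp
  obtain ⟨q, hqd⟩ : ∃ q, q = v1 1 := ⟨_, rfl⟩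
  have e1' : M *ᵥ ![0, 1, 0, 0, 0, 0, 0] = ![0, q, 0, 0, 0, 0, 0] := by
    rw [← hv1, hqd]; exact e1
  have e5' : M *ᵥ ![0, 0, 0, 0, 0, 1, 0] = ![0, 0, 0, 0, 0, q⁻¹, 0] := by
    rw [← hv5, hqd, ← hsi]; exact e5
  rw [← hqd] at f2 f4 ⊢
  ext i j
  rw [col]
  fin_cases j
  · change (M *ᵥ Pi.single 0 1) i = dM p q i 0
    rw [s0, h0]; fin_cases i <;> simp [dM, e0, Matrix.diagonal]
  · change (M *ᵥ Pi.single 1 1) i = dM p q i 1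
    rw [s1, e1']; fin_cases i <;> simp [dM, Matrix.diagonal]
  · change (M *ᵥ Pi.single 2 1) i = dM p q i 2
    rw [s2, f2]; fin_cases i <;> simp [dM, Matrix.diagonal]
  · change (M *ᵥ Pi.single 3 1) i = dM p q i 3
    rw [s3, f3]; fin_cases i <;> simp [dM, Matrix.diagonal]
  · change (M *ᵥ Pi.single 4 1) i = dM p q i 4
    rw [s4, f4]; fin_cases i <;> simp [dM, Matrix.diagonal]
  · change (M *ᵥ Pi.single 5 1) i = dM p q i 5
    rw [s5, e5']; fin_cases i <;> simp [dM, Matrix.diagonal]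
  · change (M *ᵥ Pi.single 6 1) i = dM p q i 6
    rw [s6, h6]; fin_cases i <;> simp [dM, e6, Matrix.diagonal]

end inv2
end ReePaper

namespace ReePaper

section fin
variable {F : Type*} [Field F] [Fintype F] [CharP F 3]

lemma isUnit_of_good {M M' : Matrix (Fin 7) (Fin 7) F} (h : Good M M') : IsUnit M := by
  rw [← Matrix.mulVec_injective_iff_isUnit]
  rw [← Matrix.coe_mulVecLin, injective_iff_map_eq_zero]
  intro x hx
  rw [Matrix.mulVecLin_apply] at hx
  have hb : ∀ y, bil x y = 0 := fun y => by
    rw [← h.bil, hx]; simp [bil]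
  have := hb ![1, 0, 0, 0, 0, 0, 0]
  have := hb ![0, 1, 0, 0, 0, 0, 0]
  have := hb ![0, 0, 1, 0, 0, 0, 0]
  have := hb ![0, 0, 0, 1, 0, 0, 0]
  have := hb ![0, 0, 0, 0, 1, 0, 0]
  have := hb ![0, 0, 0, 0, 0, 1, 0]
  have := hb ![0, 0, 0, 0, 0, 0, 1]
  simp [bil] at *
  funext i
  fin_cases i <;> simp [*]

/-- The twisting automorphism. -/
def sg (F : Type*) [Field F] [CharP F 3] (m : ℕ) : F →+* F := iterateFrobenius F 3 (m + 1)

lemma sg_apply (m : ℕ) (x : F) : sg F m x = (x ^ 3 ^ m) ^ 3 := by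
  rw [sg, iterateFrobenius_def, ← pow_mul, pow_succ]

lemma sg_pow {m : ℕ} (hF : Fintype.card F = 3 ^ (2 * m + 1)) (x : F) : sg F m (x ^ 3 ^ m) = x := by
  rw [sg_apply, ← pow_mul, ← pow_mul]
  have : 3 ^ m * (3 ^ m * 3) = Fintype.card F := by rw [hF]; ring
  rw [this, FiniteField.pow_card]

lemma sg_pow' {m : ℕ} (hF : Fintype.card F = 3 ^ (2 * m + 1)) (x : F) :
    (sg F m x) ^ 3 ^ m = x := by
  rw [← map_pow, sg_pow hF]

lemma pow_surj {m : ℕ} (hF : Fintype.card F = 3 ^ (2 * m + 1)) (y : F) :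
    ∃ x : F, x ^ 3 ^ m = y := ⟨_, sg_pow' hF y⟩

lemma pow_inj {m : ℕ} (hF : Fintype.card F = 3 ^ (2 * m + 1)) {x y : F}
    (h : x ^ 3 ^ m = y ^ 3 ^ m) : x = y := by
  rw [← sg_pow hF x, h, sg_pow hF]

lemma amat_eq (t : ℕ) (x : F) : amat t x = aM x (x ^ t) := by
  have h1 : x ^ (3 * t + 1) = x * (x ^ t) ^ 3 := by ring
  have h2 : x ^ (3 * t + 2) = x ^ 2 * (x ^ t) ^ 3 := by ring
  have h3 : x ^ (4 * t + 2) = x ^ 2 * (x ^ t) ^ 4 := by ring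
  have h4 : x ^ (2 * t + 1) = x * (x ^ t) ^ 2 := by ring
  have h5 : x ^ (2 * t) = (x ^ t) ^ 2 := by ring
  have h6 : x ^ (t + 1) = x * x ^ t := by ring
  simp only [amat, aM, h1, h2, h3, h4, h5, h6]

lemma bmat_eq (t : ℕ) (x : F) : bmat t x = bM x (x ^ t) := by
  have h5 : x ^ (2 * t) = (x ^ t) ^ 2 := by ring
  have h6 : x ^ (t + 1) = x * x ^ t := by ring
  simp only [bmat, bM, h5, h6]

lemma cmat_eq (t : ℕ) (x : F) : cmat t x = cM x (x ^ t) := by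
  have h5 : x ^ (2 * t) = (x ^ t) ^ 2 := by ring
  simp only [cmat, cM, h5]

lemma aM_map (f : F →+* F) (X Y : F) : (aM X Y).map f = aM (f X) (f Y) := by
  ext i j
  fin_cases i <;> fin_cases j <;> simp [aM]

lemma bM_map (f : F →+* F) (X Y : F) : (bM X Y).map f = bM (f X) (f Y) := by
  ext i j
  fin_cases i <;> fin_cases j <;> simp [bM]

lemma cM_map (f : F →+* F) (X Y : F) : (cM X Y).map f = cM (f X) (f Y) := by
  ext i j
  fin_cases i <;> fin_cases j <;> simp [cM]

lemma ups_map (f : F →+* F) : (ups : Matrix (Fin 7) (Fin 7) F).map f = ups := by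
  ext i j
  fin_cases i <;> fin_cases j <;> simp [ups]

lemma dM_map (f : F →+* F) (p q : F) : (dM p q).map f = dM (f p) (f q) := by
  rw [dM, dM, Matrix.diagonal_map (map_zero f)]
  congr 1
  symm
  apply vec7_eq <;> simp

lemma hmat_eq (t : ℕ) (l : Fˣ) :
    hmat t l = dM ((l ^ (t : ℤ) : Fˣ) : F) ((l ^ (1 - (t : ℤ)) : Fˣ) : F) := by
  rw [hmat, dM]
  congr 1
  apply vec7_eq <;> simp only [Matrix.cons_val]
  · rw [← Units.val_inv_eq_inv_val, ← Units.val_mul, ← _root_.zpow_neg, ← _root_.zpow_add]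
    congr 2; ring
  · rw [← Units.val_inv_eq_inv_val, ← Units.val_mul, ← _root_.zpow_neg, ← _root_.zpow_add]
    congr 2; ring
  · rw [← Units.val_inv_eq_inv_val, ← _root_.zpow_neg]
    congr 2; ring
  · rw [← Units.val_inv_eq_inv_val, ← _root_.zpow_neg]

lemma good_gen {m : ℕ} (hF : Fintype.card F = 3 ^ (2 * m + 1)) (X : F) :
    Good (aM X (X ^ 3 ^ m)) ((aM X (X ^ 3 ^ m)).map (sg F m)) ∧
    Good (bM X (X ^ 3 ^ m)) ((bM X (X ^ 3 ^ m)).map (sg F m)) ∧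
    Good (cM X (X ^ 3 ^ m)) ((cM X (X ^ 3 ^ m)).map (sg F m)) := by
  rw [aM_map, bM_map, cM_map, sg_pow hF, sg_apply]
  exact ⟨good_aM _ _, good_bM _ _, good_cM _ _⟩

lemma good_hmat {m : ℕ} (hF : Fintype.card F = 3 ^ (2 * m + 1)) (l : Fˣ) :
    Good (hmat (3 ^ m) l) ((hmat (3 ^ m) l).map (sg F m)) := by
  rw [hmat_eq, dM_map]
  have key : ∀ u : Fˣ, sg F m ((u ^ ((3 ^ m : ℕ) : ℤ) : Fˣ) : F) = u := fun u => by
    rw [zpow_natCast, Units.val_pow_eq_pow_val, sg_pow hF]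
  have h1 : sg F m ((l ^ ((3 ^ m : ℕ) : ℤ) : Fˣ) : F) =
      ((l ^ ((3 ^ m : ℕ) : ℤ) : Fˣ) : F) * ((l ^ (1 - ((3 ^ m : ℕ) : ℤ)) : Fˣ) : F) := by
    rw [key, ← Units.val_mul, ← _root_.zpow_add]
    simp
  have h2 : sg F m ((l ^ (1 - ((3 ^ m : ℕ) : ℤ)) : Fˣ) : F) =
      ((l ^ ((3 ^ m : ℕ) : ℤ) : Fˣ) : F) ^ 2 * ((l ^ (1 - ((3 ^ m : ℕ) : ℤ)) : Fˣ) : F)⁻¹ := by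
    rw [sg_apply, ← Units.val_inv_eq_inv_val, ← Units.val_pow_eq_pow_val,
      ← Units.val_pow_eq_pow_val, ← Units.val_pow_eq_pow_val, ← Units.val_mul, ← zpow_natCast,
      ← zpow_natCast, ← zpow_natCast, ← _root_.zpow_neg, ← _root_.zpow_mul, ← _root_.zpow_mul, ← _root_.zpow_mul, ← _root_.zpow_add]
    have hq : l ^ ((3 : ℤ) ^ (2 * m + 1)) = l := by
      have : l ^ (3 ^ (2 * m + 1)) = l := by
        ext
        rw [Units.val_pow_eq_pow_val, ← hF, FiniteField.pow_card]
      exact_mod_cast this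
    have e : (1 - ((3 ^ m : ℕ) : ℤ)) * (((3 ^ m : ℕ) : ℤ) * ((3 : ℕ) : ℤ)) =
        3 * 3 ^ m - 3 ^ (2 * m + 1) := by push_cast; ring
    rw [e, _root_.zpow_sub, hq]
    have e2 : ((3 ^ m : ℕ) : ℤ) * ((2 : ℕ) : ℤ) + -(1 - ((3 ^ m : ℕ) : ℤ)) = 3 * 3 ^ m - 1 := by
      push_cast; ring
    rw [e2, _root_.zpow_sub, zpow_one]
  rw [h1, h2]
  exact good_dM _ _ (Units.ne_zero _) (Units.ne_zero _)

lemma ree_good {m : ℕ} (hF : Fintype.card F = 3 ^ (2 * m + 1)) {g : GL (Fin 7) F}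
    (hg : g ∈ ReeGroup (F := F) (3 ^ m)) : Good g.val (g.val.map (sg F m)) := by
  induction hg using Subgroup.closure_induction with
  | mem g hg =>
    rcases hg with ⟨x, h⟩ | ⟨x, h⟩ | ⟨x, h⟩ | ⟨l, h⟩ | h
    · rw [h, amat_eq]; exact (good_gen hF x).1
    · rw [h, bmat_eq]; exact (good_gen hF x).2.1
    · rw [h, cmat_eq]; exact (good_gen hF x).2.2
    · rw [h]; exact good_hmat hF l
    · rw [h, ups_map]; exact good_ups
  | one =>
    rw [Units.val_one, Matrix.map_one _ (map_zero _) (map_one _)]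
    exact good_one
  | mul a b _ _ ha hb =>
    rw [Units.val_mul, Matrix.map_mul]
    exact good_mul ha hb
  | inv a _ ha =>
    refine good_inv ha a.mul_inv ?_
    rw [← Matrix.map_mul, a.mul_inv, Matrix.map_one _ (map_zero _) (map_one _)]

lemma exists_S {m : ℕ} (hF : Fintype.card F = 3 ^ (2 * m + 1)) (a b c : F) :
    ∃ g ∈ ReeGroup (F := F) (3 ^ m),
      g.val = aM a (a ^ 3 ^ m) * bM b (b ^ 3 ^ m) * cM c (c ^ 3 ^ m) := by
  obtain ⟨ga, ha⟩ := isUnit_of_good (good_gen hF a).1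
  obtain ⟨gb, hb⟩ := isUnit_of_good (good_gen hF b).2.1
  obtain ⟨gc, hc⟩ := isUnit_of_good (good_gen hF c).2.2
  refine ⟨ga * gb * gc, ?_, by rw [← ha, ← hb, ← hc]; rfl⟩
  refine mul_mem (mul_mem ?_ ?_) ?_ <;> apply Subgroup.subset_closure
  · exact Or.inl ⟨a, by rw [amat_eq]; exact ha⟩
  · exact Or.inr (Or.inl ⟨b, by rw [bmat_eq]; exact hb⟩)
  · exact Or.inr (Or.inr (Or.inl ⟨c, by rw [cmat_eq]; exact hc⟩))

lemma exists_ups (m : ℕ) :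
    ∃ g ∈ ReeGroup (F := F) (3 ^ m), g.val = ups := by
  obtain ⟨g, hg⟩ := isUnit_of_good (good_ups (K := F))
  exact ⟨g, Subgroup.subset_closure (Or.inr (Or.inr (Or.inr (Or.inr hg)))), hg⟩

/-- The points of the Ree ovoid. -/
def pt (m : ℕ) : Option (F × F × F) → (Fin 7 → F)
  | none => e0
  | some (a, b, c) =>
    (aM a (a ^ 3 ^ m) * bM b (b ^ 3 ^ m) * cM c (c ^ 3 ^ m)) *ᵥ e6

lemma S_apply (m : ℕ) (a b c : F) (w : Fin 7 → F) :
    let v := (aM a (a ^ 3 ^ m) * bM b (b ^ 3 ^ m) * cM c (c ^ 3 ^ m)) *ᵥ w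
    v 6 = w 6 ∧ v 5 = w 5 - a ^ 3 ^ m * w 6 ∧
    v 4 = (w 4 + b ^ 3 ^ m * w 6) - a * w 5 + a * a ^ 3 ^ m * w 6 ∧
    v 3 = (w 3 - c ^ 3 ^ m * w 6 + b ^ 3 ^ m * w 5) + a ^ 3 ^ m * (w 4 + b ^ 3 ^ m * w 6) := by
  intro v
  have : v = aM a (a ^ 3 ^ m) *ᵥ (bM b (b ^ 3 ^ m) *ᵥ (cM c (c ^ 3 ^ m) *ᵥ w)) := by
    rw [Matrix.mulVec_mulVec, Matrix.mulVec_mulVec]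
  rw [this, aM_mulVec, bM_mulVec, cM_mulVec]
  simp only [Matrix.cons_val]
  exact ⟨trivial, trivial, trivial, trivial⟩

lemma pt_inj {m : ℕ} (hF : Fintype.card F = 3 ^ (2 * m + 1)) {o o' : Option (F × F × F)} {k : F}
    (h : pt m o = k • pt m o') : o = o' := by
  rcases o with _ | ⟨a, b, c⟩ <;> rcases o' with _ | ⟨a', b', c'⟩
  · rfl
  · exfalso
    have h6 := congrFun h 6
    have h0 := congrFun h 0
    rw [Pi.smul_apply] at h6 h0
    simp only [pt] at h6 h0
    rw [(S_apply m a' b' c' e6).1] at h6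
    simp [e0, e6] at h6
    rw [← h6] at h0
    simp [e0] at h0
  · exfalso
    have h6 := congrFun h 6
    rw [Pi.smul_apply] at h6
    simp only [pt] at h6
    rw [(S_apply m a b c e6).1] at h6
    simp [e0, e6] at h6
  · have h6 := congrFun h 6
    have h5 := congrFun h 5
    have h4 := congrFun h 4
    have h3 := congrFun h 3
    rw [Pi.smul_apply] at h6 h5 h4 h3
    simp only [pt] at h6 h5 h4 h3
    obtain ⟨r6, r5, r4, r3⟩ := S_apply m a b c e6
    obtain ⟨s6, s5, s4, s3⟩ := S_apply m a' b' c' e6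
    rw [r6, s6] at h6
    rw [r5, s5] at h5
    rw [r4, s4] at h4
    rw [r3, s3] at h3
    simp [e6] at h6 h5 h4 h3
    rw [← h6] at h5 h4 h3
    have ha : a = a' := pow_inj hF (by simpa using h5)
    subst ha
    have hb : b = b' := pow_inj hF (by simpa using h4)
    subst hb
    have hc : c = c' := pow_inj hF (by simpa using h3)
    rw [hc]

lemma pt_om {m : ℕ} (hF : Fintype.card F = 3 ^ (2 * m + 1)) (o : Option (F × F × F)) :
    Om (sg F m) (pt m o) := by
  rcases o with _ | ⟨a, b, c⟩
  · exact om_e0 _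
  · obtain ⟨g, hg, h⟩ := exists_S hF a b c
    simp only [pt]
    rw [← h]
    exact om_mulVec (ree_good hF hg) g.isUnit (om_e6 _)

lemma om_pt {m : ℕ} (hF : Fintype.card F = 3 ^ (2 * m + 1)) {x : Fin 7 → F}
    (hx : Om (sg F m) x) : ∃ (o : Option (F × F × F)) (k : F), k ≠ 0 ∧ x = k • pt m o := by
  by_cases h6 : x 6 = 0
  · have := om_inf hx h6
    refine ⟨none, x 0, ?_, this⟩
    intro h
    rw [h, zero_smul] at this
    exact hx.1 this
  · obtain ⟨a, ha⟩ := pow_surj hF (- x 5 / x 6)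
    obtain ⟨b, hb⟩ := pow_surj hF (x 4 / x 6 - a * a ^ 3 ^ m)
    obtain ⟨c, hc⟩ := pow_surj hF (a ^ 3 ^ m * b ^ 3 ^ m - x 3 / x 6)
    refine ⟨some (a, b, c), x 6, h6, ?_⟩
    obtain ⟨g, hg, h⟩ := exists_S hF a b c
    obtain ⟨w, hw⟩ : ∃ w, w = (g⁻¹).val *ᵥ x := ⟨_, rfl⟩
    have hxw : x = g.val *ᵥ w := by
      rw [hw, Matrix.mulVec_mulVec, ← Units.val_mul, mul_inv_cancel, Units.val_one,
        Matrix.one_mulVec]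
    have how : Om (sg F m) w := by
      rw [hw]
      exact om_mulVec (ree_good hF (inv_mem hg)) (g⁻¹).isUnit hx
    obtain ⟨s6, s5, s4, s3⟩ := S_apply m a b c w
    rw [← h, ← hxw] at s6 s5 s4 s3
    rw [← s6] at s5 s4 s3
    have w5 : w 5 = 0 := by
      rw [ha] at s5; field_simp at s5; grind
    have w4 : w 4 = 0 := by
      rw [w5, hb] at s4; field_simp at s4; grind
    have w3 : w 3 = 0 := by
      rw [w5, w4, hc] at s3; field_simp at s3; grind
    have := om_zero how (by rw [← s6]; exact h6) w5 w4 w3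
    have hx2 : g.val *ᵥ w = w 6 • pt m (some (a, b, c)) := by
      have e : g.val *ᵥ (w 6 • e6) = w 6 • pt m (some (a, b, c)) := by
        rw [Matrix.mulVec_smul, h]; rfl
      rwa [← this] at e
    rw [← s6] at hx2
    exact hxw.trans hx2

lemma S_e0 (a A b B c C : F) : (aM a A * bM b B * cM c C) *ᵥ e0 = e0 := by
  rw [← Matrix.mulVec_mulVec, ← Matrix.mulVec_mulVec, cM_mulVec]
  rw [bM_mulVec, aM_mulVec]
  apply vec7_eq <;> simp [e0]

lemma trans_one {m : ℕ} (hF : Fintype.card F = 3 ^ (2 * m + 1)) (o : Option (F × F × F)) :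
    ∃ g ∈ ReeGroup (F := F) (3 ^ m), ∃ k : F, k ≠ 0 ∧ g.val *ᵥ e0 = k • pt m o := by
  rcases o with _ | ⟨a, b, c⟩
  · exact ⟨1, one_mem _, 1, one_ne_zero, by simp [pt]⟩
  · obtain ⟨g, hg, h⟩ := exists_S hF a b c
    obtain ⟨u, hu, h'⟩ := exists_ups (F := F) m
    refine ⟨g * u, mul_mem hg hu, -1, by simp, ?_⟩
    have : (ups : Matrix (Fin 7) (Fin 7) F) *ᵥ e0 = (-1 : F) • e6 := by
      rw [ups_mulVec]
      apply vec7_eq <;> simp [e0, e6]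
    rw [Units.val_mul, ← Matrix.mulVec_mulVec, h', this, Matrix.mulVec_smul, h]
    rfl

lemma trans_two {m : ℕ} (hF : Fintype.card F = 3 ^ (2 * m + 1)) {o o' : Option (F × F × F)}
    (hne : o ≠ o') :
    ∃ g ∈ ReeGroup (F := F) (3 ^ m), ∃ k k' : F, k ≠ 0 ∧ k' ≠ 0 ∧ g.val *ᵥ e0 = k • pt m o ∧
      g.val *ᵥ e6 = k' • pt m o' := by
  obtain ⟨u, hu, k, hk, huk⟩ := trans_one hF o
  have ho : Om (sg F m) ((u⁻¹).val *ᵥ pt m o') :=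
    om_mulVec (ree_good hF (inv_mem hu)) (u⁻¹).isUnit (pt_om hF o')
  obtain ⟨z, l, hl, hz⟩ := om_pt hF ho
  have hz' : pt m o' = l • (u.val *ᵥ pt m z) := by
    rw [← Matrix.mulVec_smul, ← hz, Matrix.mulVec_mulVec, ← Units.val_mul, mul_inv_cancel,
      Units.val_one, Matrix.one_mulVec]
  rcases z with _ | ⟨a, b, c⟩
  · exfalso
    apply hne
    have : pt m o' = (l * k) • pt m o := by
      rw [hz', mul_smul, ← huk]; rfl
    exact (pt_inj hF this).symm
  · obtain ⟨g, hg, h⟩ := exists_S hF a b c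
    refine ⟨u * g, mul_mem hu hg, k, l⁻¹, hk, inv_ne_zero hl, ?_, ?_⟩
    · rw [Units.val_mul, ← Matrix.mulVec_mulVec, h, S_e0, huk]
    · rw [Units.val_mul, ← Matrix.mulVec_mulVec, h, hz', smul_smul, inv_mul_cancel₀ hl, one_smul]
      rfl

lemma end_pow_eq {A : Type*} (f : Function.End A) (n : ℕ) : f ^ n = (f : A → A)^[n] := by
  induction n with
  | zero => rfl
  | succ n ih => rw [pow_succ, ih]; rfl

lemma exists_fixed {m : ℕ} (hF : Fintype.card F = 3 ^ (2 * m + 1)) {c : GL (Fin 7) F}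
    (hc : c ∈ ReeGroup (F := F) (3 ^ m)) {r : ℕ} (hr : r.Prime) (hr2 : r ≠ 2)
    (hrq : r ∣ Fintype.card F - 1) (hcr : c ^ r = 1) :
    ∃ (o o' : Option (F × F × F)) (k k' : F), o ≠ o' ∧ c.val *ᵥ pt m o = k • pt m o ∧ c.val *ᵥ pt m o' = k' • pt m o' := by
  classical
  have hex : ∀ o, ∃ (o' : Option (F × F × F)) (k : F), k ≠ 0 ∧ c.val *ᵥ pt m o = k • pt m o' := fun o =>
    om_pt hF (om_mulVec (ree_good hF hc) c.isUnit (pt_om hF o))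
  choose f k hk hf using hex
  have hpow : ∀ n o, ∃ l : F, (c ^ n).val *ᵥ pt m o = l • pt m (f^[n] o) := by
    intro n
    induction n with
    | zero => intro o; exact ⟨1, by simp⟩
    | succ n ih =>
      intro o
      obtain ⟨l, hl⟩ := ih (f o)
      refine ⟨k o * l, ?_⟩
      rw [pow_succ, Units.val_mul, ← Matrix.mulVec_mulVec, hf, Matrix.mulVec_smul, hl, smul_smul]
      rfl
  have hfr : f^[r] = id := by
    funext o
    obtain ⟨l, hl⟩ := hpow r o
    rw [hcr, Units.val_one, Matrix.one_mulVec] at hl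
    exact (pt_inj hF hl).symm
  have : Fact r.Prime := ⟨hr⟩
  have key := Equiv.Perm.card_fixedPoints_modEq (α := Option (F × F × F)) (f := f) (p := r) (n := 1)
    (by
      rw [pow_one]
      exact (end_pow_eq f r).trans hfr)
  have hcard : Fintype.card (Option (F × F × F)) ≡ 2 [MOD r] := by
    rw [Fintype.card_option, Fintype.card_prod, Fintype.card_prod]
    have h1 : Fintype.card F ≡ 1 [MOD r] :=
      ((Nat.modEq_iff_dvd' Fintype.card_pos).mpr hrq).symm
    exact (h1.mul (h1.mul h1)).add_right 1
  have h2 := key.symm.trans hcard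
  have hr3 : 2 < r := lt_of_le_of_ne hr.two_le (Ne.symm hr2)
  have h3 : 1 < Fintype.card (Function.fixedPoints f) := by
    by_contra hlt
    have h4 : Fintype.card (Function.fixedPoints f) = 2 :=
      Nat.ModEq.eq_of_lt_of_lt h2 (by omega) hr3
    omega
  obtain ⟨⟨o, ho⟩, ⟨o', ho'⟩, hne⟩ := Fintype.one_lt_card_iff.mp h3
  refine ⟨o, o', k o, k o', fun h => hne (Subtype.ext h), ?_, ?_⟩
  · rw [hf o]; congr 2
  · rw [hf o']; congr 2

end fin
end ReePaper

namespace ReePaper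

section main
variable {F : Type*} [Field F] [Fintype F]

lemma exists_odd_prime {m : ℕ} (hm : 0 < m) :
    ∃ r : ℕ, r.Prime ∧ r ≠ 2 ∧ r ≠ 3 ∧ r ∣ 3 ^ (2 * m + 1) - 1 := by
  obtain ⟨j, rfl⟩ : ∃ j, m = j + 1 := ⟨m - 1, by omega⟩
  have h9 : ∃ k, 3 ^ (2 * (j + 1) + 1) = 8 * k + 27 := by
    induction j with
    | zero => exact ⟨0, by norm_num⟩
    | succ j ih =>
      obtain ⟨k, hk⟩ := ih (by omega)
      refine ⟨9 * k + 27, ?_⟩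
      have : 3 ^ (2 * (j + 1 + 1) + 1) = 9 * 3 ^ (2 * (j + 1) + 1) := by ring
      rw [this, hk]; ring
  obtain ⟨k, hk⟩ := h9
  have hne : 4 * k + 13 ≠ 1 := by omega
  have hd : (4 * k + 13).minFac ∣ 3 ^ (2 * (j + 1) + 1) - 1 :=
    (Nat.minFac_dvd _).trans ⟨2, by omega⟩
  refine ⟨(4 * k + 13).minFac, Nat.minFac_prime hne, ?_, ?_, hd⟩
  · intro h
    have := Nat.minFac_dvd (4 * k + 13)
    rw [h] at this
    omega
  · intro h
    rw [h, pow_succ] at hd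
    have : 0 < 3 ^ (2 * (j + 1)) := by positivity
    omega

lemma hsub_card (t : ℕ) : Finite (Hsub (F := F) t) ∧
    Nat.card (Hsub (F := F) t) ≤ Fintype.card F - 1 := by
  classical
  let f : Fˣ →* Matrix (Fin 7) (Fin 7) F :=
    { toFun := hmat t
      map_one' := by
        rw [hmat, ← Matrix.diagonal_one]
        congr 1
        funext i
        fin_cases i <;> simp
      map_mul' := fun a b => by
        rw [hmat, hmat, hmat, Matrix.diagonal_mul_diagonal]
        congr 1
        funext i
        fin_cases i <;> simp [_root_.mul_zpow, _root_.mul_pow, mul_comm] }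
  have hle : Hsub (F := F) t ≤ f.toHomUnits.range := by
    rw [Hsub, Subgroup.closure_le]
    rintro g ⟨l, hl⟩
    refine ⟨l, ?_⟩
    ext1
    rw [hl]
    rfl
  have hfin : Finite f.toHomUnits.range := inferInstance
  refine ⟨Finite.of_injective _ (Subgroup.inclusion_injective hle), ?_⟩
  refine (Subgroup.card_le_of_le hle).trans ?_
  have h1 : Nat.card f.toHomUnits.range ≤ Nat.card Fˣ :=
    Nat.card_le_card_of_surjective f.toHomUnits.rangeRestrict f.toHomUnits.rangeRestrict_surjective
  rwa [Nat.card_eq_fintype_card (α := Fˣ), Fintype.card_units] at h1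

variable [CharP F 3]

lemma sg_sg {m : ℕ} (hF : Fintype.card F = 3 ^ (2 * m + 1)) (p : F) :
    sg F m (sg F m p) = p ^ 3 := by
  rw [sg_apply, sg_pow' hF]

lemma mem_hsub {m : ℕ} (hF : Fintype.card F = 3 ^ (2 * m + 1)) {g : GL (Fin 7) F} {p q : F}
    (hp : p ≠ 0) (hpq : p * q = sg F m p) (hg : g.val = dM p q) :
    g ∈ Hsub (F := F) (3 ^ m) := by
  apply Subgroup.subset_closure
  have hs : sg F m p ≠ 0 := by simpa using hp
  refine ⟨Units.mk0 _ hs, ?_⟩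
  have h1 : ((Units.mk0 _ hs ^ ((3 ^ m : ℕ) : ℤ) : Fˣ) : F) = p := by
    rw [zpow_natCast, Units.val_pow_eq_pow_val, Units.val_mk0, sg_pow' hF]
  have h2 : ((Units.mk0 _ hs ^ (1 - ((3 ^ m : ℕ) : ℤ)) : Fˣ) : F) = q := by
    rw [_root_.zpow_sub, Units.val_mul, Units.val_inv_eq_inv_val, h1, zpow_one, Units.val_mk0,
      ← hpq]
    field_simp
  rw [hmat_eq, h1, h2, hg]

lemma pow_six {r : ℕ} (hr : r.Prime) (h2 : r ≠ 2) (h3 : r ≠ 3) {p : F} (hp : p ^ r = 1)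
    (h6 : p ^ 6 = 1) : p = 1 := by
  have hc : Nat.Coprime r 6 := by
    rw [Nat.Prime.coprime_iff_not_dvd hr]
    intro h
    have : r ∣ 2 * 3 := h
    rcases (Nat.Prime.dvd_mul hr).mp this with h | h
    · exact h2 ((Nat.prime_dvd_prime_iff_eq hr Nat.prime_two).mp h)
    · exact h3 ((Nat.prime_dvd_prime_iff_eq hr Nat.prime_three).mp h)
  have h := Nat.dvd_gcd (orderOf_dvd_of_pow_eq_one hp) (orderOf_dvd_of_pow_eq_one h6)
  rw [Nat.Coprime.gcd_eq_one hc, Nat.dvd_one, orderOf_eq_one_iff] at h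
  exact h

lemma comm_fix {p q : F} (hp : p ≠ 0) (hq : q ≠ 0) (a1 : p ≠ q) (a2 : q ≠ 1) (a3 : p ≠ 1)
    (a4 : p ^ 2 ≠ q) (a5 : p * q ≠ 1) (a6 : p ^ 2 ≠ 1) {M : Matrix (Fin 7) (Fin 7) F}
    (h : M * dM p q = dM p q * M) : M *ᵥ e0 = M 0 0 • e0 ∧ M *ᵥ e6 = M 6 6 • e6 := by
  have key : ∀ i j, M i j * ![p, q, p * q⁻¹, 1, q * p⁻¹, q⁻¹, p⁻¹] j =
      ![p, q, p * q⁻¹, 1, q * p⁻¹, q⁻¹, p⁻¹] i * M i j := fun i j => by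
    have := congrFun (congrFun h i) j
    rwa [dM, Matrix.mul_diagonal, Matrix.diagonal_mul] at this
  have key' : ∀ i j, (![p, q, p * q⁻¹, 1, q * p⁻¹, q⁻¹, p⁻¹] j -
      ![p, q, p * q⁻¹, 1, q * p⁻¹, q⁻¹, p⁻¹] i) ≠ 0 → M i j = 0 := fun i j hne => by
    have := key i j
    have h2 : (![p, q, p * q⁻¹, 1, q * p⁻¹, q⁻¹, p⁻¹] j -
      ![p, q, p * q⁻¹, 1, q * p⁻¹, q⁻¹, p⁻¹] i) * M i j = 0 := by
      rw [sub_mul, ← this]; ring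
    exact (mul_eq_zero.mp h2).resolve_left hne
  have c0 : M *ᵥ e0 = fun i => M i 0 := by
    have : (e0 : Fin 7 → F) = Pi.single 0 1 := by
      funext i; fin_cases i <;> simp [e0]
    rw [this, Matrix.mulVec_single_one]; rfl
  have c6 : M *ᵥ e6 = fun i => M i 6 := by
    have : (e6 : Fin 7 → F) = Pi.single 6 1 := by
      funext i; fin_cases i <;> simp [e6]
    rw [this, Matrix.mulVec_single_one]; rfl
  have z10 : M 1 0 = 0 := key' 1 0 (by simp only [Matrix.cons_val]; grind)
  have z20 : M 2 0 = 0 := key' 2 0 (by simp only [Matrix.cons_val]; grind)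
  have z30 : M 3 0 = 0 := key' 3 0 (by simp only [Matrix.cons_val]; grind)
  have z40 : M 4 0 = 0 := key' 4 0 (by simp only [Matrix.cons_val]; grind)
  have z50 : M 5 0 = 0 := key' 5 0 (by simp only [Matrix.cons_val]; grind)
  have z60 : M 6 0 = 0 := key' 6 0 (by simp only [Matrix.cons_val]; grind)
  have z06 : M 0 6 = 0 := key' 0 6 (by simp only [Matrix.cons_val]; grind)
  have z16 : M 1 6 = 0 := key' 1 6 (by simp only [Matrix.cons_val]; grind)
  have z26 : M 2 6 = 0 := key' 2 6 (by simp only [Matrix.cons_val]; grind)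
  have z36 : M 3 6 = 0 := key' 3 6 (by simp only [Matrix.cons_val]; grind)
  have z46 : M 4 6 = 0 := key' 4 6 (by simp only [Matrix.cons_val]; grind)
  have z56 : M 5 6 = 0 := key' 5 6 (by simp only [Matrix.cons_val]; grind)
  rw [c0, c6]
  constructor
  · funext i
    fin_cases i <;> simp [e0, z10, z20, z30, z40, z50, z60]
  · funext i
    fin_cases i <;> simp [e6, z06, z16, z26, z36, z46, z56]

lemma conj_fix {g c : GL (Fin 7) F} {v w : Fin 7 → F} {k l : F}
    (hg : g.val *ᵥ v = k • w) (hc : c.val *ᵥ w = l • w) :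
    (g⁻¹ * c * g).val *ᵥ v = l • v := by
  have h : (g * (g⁻¹ * c * g)).val *ᵥ v = g.val *ᵥ (l • v) := by
    have : g * (g⁻¹ * c * g) = c * g := by group
    rw [this, Units.val_mul, ← Matrix.mulVec_mulVec, hg, Matrix.mulVec_smul, hc,
      Matrix.mulVec_smul, hg, smul_comm]
  rw [Units.val_mul, ← Matrix.mulVec_mulVec] at h
  exact Matrix.mulVec_injective_of_isUnit g.isUnit h

lemma main_aux {m : ℕ} (hm : 0 < m) (hF : Fintype.card F = 3 ^ (2 * m + 1))
    (C : Subgroup (GL (Fin 7) F)) (hC : C ≤ ReeGroup (F := F) (3 ^ m)) (hcyc : IsCyclic C)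
    (hcard : Nat.card C = 3 ^ (2 * m + 1) - 1) :
    ∃ g ∈ ReeGroup (F := F) (3 ^ m),
      C.map (MulAut.conj g).toMonoidHom = Hsub (F := F) (3 ^ m) := by
  obtain ⟨r, hr, hr2, hr3, hrd⟩ := exists_odd_prime hm
  have : Fact r.Prime := ⟨hr⟩
  have hCpos : 0 < Nat.card C := by
    rw [hcard]
    have : 1 < 3 ^ (2 * m + 1) := Nat.one_lt_pow (by omega) (by norm_num)
    omega
  have hCfin : Finite C := Nat.finite_of_card_ne_zero hCpos.ne'
  obtain ⟨⟨c, hcC⟩, hco⟩ := exists_prime_orderOf_dvd_card' (G := C) r (by rw [hcard]; exact hrd)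
  rw [Subgroup.orderOf_mk] at hco
  have hcr : c ^ r = 1 := by rw [← hco]; exact pow_orderOf_eq_one c
  have hc1 : c ≠ 1 := by
    rintro rfl
    rw [orderOf_one] at hco
    exact hr.one_lt.ne hco
  obtain ⟨o, o', k, k', hne, ho, ho'⟩ := exists_fixed hF (hC hcC) hr hr2 (by rw [hF]; exact hrd) hcr
  obtain ⟨g, hg, l, l', -, -, hg0, hg6⟩ := trans_two hF hne
  have good : ∀ x ∈ C, Good (g⁻¹ * x * g).val ((g⁻¹ * x * g).val.map (sg F m)) := fun x hx =>
    ree_good hF (mul_mem (mul_mem (inv_mem hg) (hC hx)) hg)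
  obtain ⟨q, hp0, hq0, hpq, hcd⟩ := good_fix (good c hcC) (conj_fix hg0 ho) (conj_fix hg6 ho')
  have hkr : k ^ r = 1 := by
    have h1 : (g⁻¹ * c * g) ^ r = 1 := by
      have : g⁻¹ * c * g = g⁻¹ * c * (g⁻¹)⁻¹ := by rw [inv_inv]
      rw [this, conj_pow, hcr]; group
    have h2 : dM k q ^ r = 1 := by
      rw [← hcd, ← Units.val_pow_eq_pow_val, h1, Units.val_one]
    rw [dM, Matrix.diagonal_pow] at h2
    have := congrFun (congrFun h2 0) 0
    simpa using this
  have hk1 : k ≠ 1 := by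
    rintro rfl
    rw [map_one, one_mul] at hpq
    rw [hpq] at hcd
    apply hc1
    have h1 : g⁻¹ * c * g = 1 := by
      ext1
      rw [hcd, Units.val_one, dM, ← Matrix.diagonal_one]
      congr 1
      funext i
      fin_cases i <;> simp
    have : c = g * (g⁻¹ * c * g) * g⁻¹ := by group
    rw [this, h1]; group
  have hk6 : k ^ 6 ≠ 1 := fun h => hk1 (pow_six hr hr2 hr3 hkr h)
  have hss := sg_sg hF k
  have b6 : k ^ 2 ≠ 1 := fun h => hk6 (by
    have : k ^ 6 = (k ^ 2) ^ 3 := by ring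
    rw [this, h, one_pow])
  have b1 : k ≠ q := by
    rintro rfl
    rw [← hpq, map_mul, ← hpq] at hss
    grind
  have b2 : q ≠ 1 := by
    rintro rfl
    rw [mul_one] at hpq
    rw [← hpq, ← hpq] at hss
    grind
  have b4 : k ^ 2 ≠ q := by
    rintro rfl
    rw [← hpq, map_mul, map_pow, ← hpq] at hss
    grind
  have b5 : k * q ≠ 1 := by
    intro h
    rw [← hpq, h, map_one] at hss
    grind
  refine ⟨g⁻¹, inv_mem hg, ?_⟩
  obtain ⟨hfin, hHc⟩ := hsub_card (F := F) (3 ^ m)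
  apply Subgroup.eq_of_le_of_card_ge
  · rintro _ ⟨x, hx, rfl⟩
    have hxe : (MulAut.conj g⁻¹).toMonoidHom x = g⁻¹ * x * g := by simp
    rw [hxe]
    have hcomm : x * c = c * x := by
      let _ := IsCyclic.commGroup (α := C)
      have := mul_comm (⟨x, hx⟩ : C) ⟨c, hcC⟩
      exact congrArg Subtype.val this
    have hcm : (g⁻¹ * x * g).val * dM k q = dM k q * (g⁻¹ * x * g).val := by
      rw [← hcd, ← Units.val_mul, ← Units.val_mul]
      congr 1
      have e1 : g⁻¹ * x * g * (g⁻¹ * c * g) = g⁻¹ * (x * c) * g := by group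
      have e2 : g⁻¹ * c * g * (g⁻¹ * x * g) = g⁻¹ * (c * x) * g := by group
      rw [e1, e2, hcomm]
    obtain ⟨f0, f6⟩ := comm_fix hp0 hq0 b1 b2 hk1 b4 b5 b6 hcm
    obtain ⟨q', hp0', -, hpq', hxd⟩ := good_fix (good x hx) f0 f6
    exact mem_hsub hF hp0' hpq' hxd
  · rw [Subgroup.card_map_of_injective (MulAut.conj g⁻¹).injective, hcard, ← hF]
    exact hHc

end main
end ReePaper

open ReePaper

/-- Every cyclic subgroup of `Ree(q)` of order `q - 1` is conjugate in `Ree(q)` to `H(q)`. -/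
theorem cyclic_conjugate_to_h (m : ℕ) (hm : 0 < m) (F : Type*) [Field F] [Fintype F]
    (hF : Fintype.card F = 3 ^ (2 * m + 1)) :
    ∀ C : Subgroup (GL (Fin 7) F), C ≤ ReeGroup (F := F) (3 ^ m) → IsCyclic ↥C →
      Nat.card ↥C = 3 ^ (2 * m + 1) - 1 →
      ∃ g ∈ ReeGroup (F := F) (3 ^ m),
        C.map (MulAut.conj g).toMonoidHom = Hsub (F := F) (3 ^ m) := by
  intro C hC hcyc hcard
  have : Fact (Nat.Prime 3) := ⟨Nat.prime_three⟩
  have : CharP F 3 := charP_of_card_eq_prime_pow hF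
  exact main_aux hm hF C hC hcyc hcard
end
end

section
/- For every involution j of Ree(q), the centralizer of j in Ree(q) is isomorphic to the direct product (Z/2Z) × PSL(2, q) and has order q(q^2 − 1). -/
open Matrix

set_option linter.unusedSectionVars false

noncomputable section

open ReePaper

namespace ReeAux

variable {F : Type*} [Field F]

/-- `α` with `x ^ t` replaced by an independent variable. -/
def aP (a A : F) : Matrix (Fin 7) (Fin 7) F :=
  !![1, A, 0, 0, -(A^3*a), -(A^3*a^2), A^4*a^2;
     0, 1, a, A*a, -(A^2*a), 0, -(A^3*a^2);
     0, 0, 1, A, -A^2, 0, A^3*a;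
     0, 0, 0, 1, A, 0, 0;
     0, 0, 0, 0, 1, -a, A*a;
     0, 0, 0, 0, 0, 1, -A;
     0, 0, 0, 0, 0, 0, 1]

/-- `β` with `x ^ t` replaced by an independent variable. -/
def bP (a A : F) : Matrix (Fin 7) (Fin 7) F :=
  !![1, 0, -A, 0, -a, 0, -(A*a);
     0, 1, 0, A, 0, -A^2, 0;
     0, 0, 1, 0, 0, 0, a;
     0, 0, 0, 1, 0, A, 0;
     0, 0, 0, 0, 1, 0, A;
     0, 0, 0, 0, 0, 1, 0;
     0, 0, 0, 0, 0, 0, 1]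

/-- `γ` with `x ^ t` replaced by an independent variable. -/
def cP (a A : F) : Matrix (Fin 7) (Fin 7) F :=
  !![1, 0, 0, -A, 0, -a, -A^2;
     0, 1, 0, 0, -A, 0, a;
     0, 0, 1, 0, 0, A, 0;
     0, 0, 0, 1, 0, 0, -A;
     0, 0, 0, 0, 1, 0, 0;
     0, 0, 0, 0, 0, 1, 0;
     0, 0, 0, 0, 0, 0, 1]

/-- `h(l)` with `l ^ t` replaced by an independent variable `k`. -/
def hP (l k : F) : Matrix (Fin 7) (Fin 7) F :=
  Matrix.diagonal ![k, l * k⁻¹, k^2 * l⁻¹, 1, l * (k⁻¹)^2, k * l⁻¹, k⁻¹]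

/-- The `G₂`-invariant product on the 7-dimensional module. -/
def cr (x y : Fin 7 → F) : Fin 7 → F :=
  ![(x 1 * y 2 - x 2 * y 1) - (x 0 * y 3 - x 3 * y 0),
    (x 0 * y 4 - x 4 * y 0) + (x 1 * y 3 - x 3 * y 1),
    (x 2 * y 3 - x 3 * y 2) - (x 0 * y 5 - x 5 * y 0),
    (x 1 * y 5 - x 5 * y 1) + (x 2 * y 4 - x 4 * y 2) - (x 0 * y 6 - x 6 * y 0),
    (x 3 * y 4 - x 4 * y 3) - (x 1 * y 6 - x 6 * y 1),
    (x 2 * y 6 - x 6 * y 2) + (x 3 * y 5 - x 5 * y 3),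
    (x 4 * y 5 - x 5 * y 4) - (x 3 * y 6 - x 6 * y 3)]

/-- The twisted product, invariant on pairs with `cr x y = 0`. -/
def tw (x y : Fin 7 → F) : Fin 7 → F :=
  ![x 0 * y 1 - x 1 * y 0,
    x 0 * y 2 - x 2 * y 0,
    -(x 1 * y 4 - x 4 * y 1),
    (x 0 * y 6 - x 6 * y 0) + (x 1 * y 5 - x 5 * y 1),
    -(x 2 * y 5 - x 5 * y 2),
    x 4 * y 6 - x 6 * y 4,
    x 5 * y 6 - x 6 * y 5]

/-- A matrix preserves the two products. -/
structure Pres (σ : F →+* F) (g : Matrix (Fin 7) (Fin 7) F) : Prop where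
  cr_eq : ∀ x y : Fin 7 → F, cr (x ᵥ* g) (y ᵥ* g) = cr x y ᵥ* g
  tw_eq : ∀ x y : Fin 7 → F, cr x y = 0 → tw (x ᵥ* g) (y ᵥ* g) = tw x y ᵥ* g.map σ

theorem Pres.mul {σ : F →+* F} {g h : Matrix (Fin 7) (Fin 7) F} (hg : Pres σ g) (hh : Pres σ h) :
    Pres σ (g * h) := by
  constructor
  · intro x y
    rw [← Matrix.vecMul_vecMul, ← Matrix.vecMul_vecMul, hh.cr_eq, hg.cr_eq, Matrix.vecMul_vecMul]
  · intro x y hxy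
    rw [← Matrix.vecMul_vecMul, ← Matrix.vecMul_vecMul, hh.tw_eq, hg.tw_eq _ _ hxy,
      Matrix.vecMul_vecMul, Matrix.map_mul]
    rw [hg.cr_eq, hxy, Matrix.zero_vecMul]

theorem Pres.one {σ : F →+* F} : Pres σ (1 : Matrix (Fin 7) (Fin 7) F) := by
  constructor
  · intro x y; simp
  · intro x y hxy; simp

theorem Pres.inv {σ : F →+* F} {g h : Matrix (Fin 7) (Fin 7) F} (hg : Pres σ g)
    (hh : h * g = 1) (hh' : g * h = 1) :
    Pres σ h := by
  have key : ∀ x y : Fin 7 → F, cr (x ᵥ* h) (y ᵥ* h) = cr x y ᵥ* h := by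
    intro x y
    have := hg.cr_eq (x ᵥ* h) (y ᵥ* h)
    simp only [Matrix.vecMul_vecMul, hh, Matrix.vecMul_one] at this
    rw [this]; simp [Matrix.vecMul_vecMul, hh']
  refine ⟨key, ?_⟩
  intro x y hxy
  have := hg.tw_eq (x ᵥ* h) (y ᵥ* h) (by rw [key, hxy, Matrix.zero_vecMul])
  simp only [Matrix.vecMul_vecMul, hh, Matrix.vecMul_one] at this
  rw [this, Matrix.vecMul_vecMul, ← Matrix.map_mul, hh']
  simp

theorem vec_aP (a A : F) (x : Fin 7 → F) : x ᵥ* aP a A =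
  ![x 0,
    x 0*A + x 1,
    x 1*a + x 2,
    x 1*a*A + x 2*A + x 3,
    -x 0*a*A^3 - x 1*a*A^2 - x 2*A^2 + x 3*A + x 4,
    -x 0*a^2*A^3 - x 4*a + x 5,
    x 0*a^2*A^4 - x 1*a^2*A^3 + x 2*a*A^3 + x 4*a*A - x 5*A + x 6] := by
  ext i
  fin_cases i <;>
  simp [aP, Matrix.vecMul, dotProduct, Fin.sum_univ_succ] <;> ring

theorem aP_pres (h3 : (3 : F) = 0) (σ : F →+* F) (a A : F) (h1 : σ A = a) (h2 : σ a = A ^ 3) :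
    Pres σ (aP a A) := by
  have hmap : (aP a A).map σ = aP (A ^ 3) a := by
    ext i j
    fin_cases i <;> fin_cases j <;> simp [aP, h1, h2]
  constructor
  · intro x y
    simp only [vec_aP]
    ext i
    fin_cases i
    · simp [cr]
      linear_combination (0) * h3
    · simp [cr]
      linear_combination (x 0*y 3*A - x 3*y 0*A) * h3
    · simp [cr]
      linear_combination (0) * h3
    · simp [cr]
      linear_combination (x 0*y 1*a^2*A^3 - x 0*y 4*a*A + x 0*y 5*A - x 1*y 0*a^2*A^3 + x 4*y 0*a*A - x 5*y 0*A) * h3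
    · simp [cr]
      linear_combination (x 0*y 1*a^2*A^4 - x 1*y 0*a^2*A^4 + x 1*y 3*a*A^2 + x 2*y 3*A^2 - x 3*y 1*a*A^2 - x 3*y 2*A^2) * h3
    · simp [cr]
      linear_combination (x 1*y 2*a^2*A^3 - x 2*y 1*a^2*A^3) * h3
    · simp [cr]
      linear_combination (x 0*y 3*a^2*A^4 + x 0*y 4*a^2*A^3 - x 1*y 2*a^2*A^4 + x 2*y 1*a^2*A^4 - x 3*y 0*a^2*A^4 - x 3*y 4*a*A + x 3*y 5*A - x 4*y 0*a^2*A^3 + x 4*y 3*a*A - x 5*y 3*A) * h3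
  · intro x y hxy
    rw [hmap]
    simp only [vec_aP]
    have c0 := congrFun hxy 0
    have c1 := congrFun hxy 1
    have c2 := congrFun hxy 2
    have c3 := congrFun hxy 3
    have c4 := congrFun hxy 4
    have c5 := congrFun hxy 5
    have c6 := congrFun hxy 6
    simp [cr] at c0 c1 c2 c3 c4 c5 c6
    ext i
    fin_cases i
    · simp [tw]
      linear_combination (0) * h3
    · simp [tw]
      linear_combination (0) * h3
    · simp [tw]
      linear_combination (A^2) * c0 + (-A) * c1 + (0) * h3
    · simp [tw]
      linear_combination (0) * h3
    · simp [tw]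
      linear_combination (a) * c3 + (-x 1*y 5*a + x 5*y 1*a) * h3
    · simp [tw]
      linear_combination (a^2*A^5) * c0 + (a^2*A^4) * c1 + (-a*A^4) * c2 + (a*A^3) * c3 + (a*A^2) * c4 + (-A^2) * c5 + (-A) * c6 + (x 0*y 1*a^3*A^6 - x 0*y 4*a^2*A^4 - x 1*y 0*a^3*A^6 - x 1*y 2*a^2*A^5 + x 2*y 1*a^2*A^5 - x 2*y 4*a*A^3 + x 4*y 0*a^2*A^4 + x 4*y 2*a*A^3) * h3
    · simp [tw]
      linear_combination (a^2*A^3) * c3 + (0) * h3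

theorem vec_bP (a A : F) (x : Fin 7 → F) : x ᵥ* bP a A =
  ![x 0,
    x 1,
    -x 0*A + x 2,
    x 1*A + x 3,
    -x 0*a + x 4,
    -x 1*A^2 + x 3*A + x 5,
    -x 0*a*A + x 2*a + x 4*A + x 6] := by
  ext i
  fin_cases i <;>
  simp [bP, Matrix.vecMul, dotProduct, Fin.sum_univ_succ] <;> ring

theorem bP_pres (h3 : (3 : F) = 0) (σ : F →+* F) (a A : F) (h1 : σ A = a) (h2 : σ a = A ^ 3) :
    Pres σ (bP a A) := by
  have hmap : (bP a A).map σ = bP (A ^ 3) a := by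
    ext i j
    fin_cases i <;> fin_cases j <;> simp [bP, h1, h2]
  constructor
  · intro x y
    simp only [vec_bP]
    ext i
    fin_cases i
    · simp [cr]
      linear_combination (0) * h3
    · simp [cr]
      linear_combination (0) * h3
    · simp [cr]
      linear_combination (-x 0*y 3*A + x 3*y 0*A) * h3
    · simp [cr]
      linear_combination (-x 0*y 4*A + x 4*y 0*A) * h3
    · simp [cr]
      linear_combination (0) * h3
    · simp [cr]
      linear_combination (x 1*y 3*A^2 - x 3*y 1*A^2) * h3
    · simp [cr]
      linear_combination (-x 0*y 3*a*A + x 3*y 0*a*A - x 3*y 4*A + x 4*y 3*A) * h3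
  · intro x y hxy
    rw [hmap]
    simp only [vec_bP]
    have c0 := congrFun hxy 0
    have c1 := congrFun hxy 1
    have c2 := congrFun hxy 2
    have c3 := congrFun hxy 3
    have c4 := congrFun hxy 4
    have c5 := congrFun hxy 5
    have c6 := congrFun hxy 6
    simp [cr] at c0 c1 c2 c3 c4 c5 c6
    ext i
    fin_cases i
    · simp [tw]
    · simp [tw]
      linear_combination (0) * h3
    · simp [tw]
      linear_combination (0) * h3
    · simp [tw]
      linear_combination (A) * c1 + (0) * h3
    · simp [tw]
      linear_combination (-A^2) * c0 + (-A) * c2 + (0) * h3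
    · simp [tw]
      linear_combination (-a) * c3 + (-x 0*y 6*a + x 6*y 0*a) * h3
    · simp [tw]
      linear_combination (-a*A^2) * c0 + (-a*A) * c2 + (A^2) * c4 + (-A) * c6 + (0) * h3

theorem vec_cP (a A : F) (x : Fin 7 → F) : x ᵥ* cP a A =
  ![x 0,
    x 1,
    x 2,
    -x 0*A + x 3,
    -x 1*A + x 4,
    -x 0*a + x 2*A + x 5,
    -x 0*A^2 + x 1*a - x 3*A + x 6] := by
  ext i
  fin_cases i <;>
  simp [cP, Matrix.vecMul, dotProduct, Fin.sum_univ_succ] <;> ring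

theorem cP_pres (h3 : (3 : F) = 0) (σ : F →+* F) (a A : F) (h1 : σ A = a) (h2 : σ a = A ^ 3) :
    Pres σ (cP a A) := by
  have hmap : (cP a A).map σ = cP (A ^ 3) a := by
    ext i j
    fin_cases i <;> fin_cases j <;> simp [cP, h1, h2]
  constructor
  · intro x y
    simp only [vec_cP]
    ext i
    fin_cases i
    · simp [cr]
      linear_combination (0) * h3
    · simp [cr]
      linear_combination (0) * h3
    · simp [cr]
      linear_combination (0) * h3
    · simp [cr]
      linear_combination (x 1*y 2*A - x 2*y 1*A) * h3
    · simp [cr]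
      linear_combination (x 1*y 3*A - x 3*y 1*A) * h3
    · simp [cr]
      linear_combination (-x 2*y 3*A + x 3*y 2*A) * h3
    · simp [cr]
      linear_combination (-x 0*y 3*A^2 + x 3*y 0*A^2) * h3
  · intro x y hxy
    rw [hmap]
    simp only [vec_cP]
    have c0 := congrFun hxy 0
    have c1 := congrFun hxy 1
    have c2 := congrFun hxy 2
    have c3 := congrFun hxy 3
    have c4 := congrFun hxy 4
    have c5 := congrFun hxy 5
    have c6 := congrFun hxy 6
    simp [cr] at c0 c1 c2 c3 c4 c5 c6
    ext i
    fin_cases i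
    · simp [tw]
    · simp [tw]
    · simp [tw]
      linear_combination (0) * h3
    · simp [tw]
      linear_combination (A) * c0 + (x 0*y 1*a - x 1*y 0*a) * h3
    · simp [tw]
      linear_combination (0) * h3
    · simp [tw]
      linear_combination (A^2) * c1 + (A) * c4 + (0) * h3
    · simp [tw]
      linear_combination (-a*A) * c0 + (-A^2) * c2 + (A) * c5 + (0) * h3


theorem ups_pres (σ : F →+* F) : Pres σ (ups : Matrix (Fin 7) (Fin 7) F) := by
  have hv : ∀ x : Fin 7 → F, x ᵥ* ups = ![-x 6, -x 5, -x 4, -x 3, -x 2, -x 1, -x 0] := by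
    intro x
    ext i
    fin_cases i <;> simp [ups, Matrix.vecMul, dotProduct, Fin.sum_univ_succ]
  have hmap : (ups : Matrix (Fin 7) (Fin 7) F).map σ = ups := by
    ext i j
    fin_cases i <;> fin_cases j <;> simp [ups]
  constructor
  · intro x y
    simp only [hv]
    ext i
    fin_cases i <;> simp [cr] <;> ring
  · intro x y hxy
    have c3 := congrFun hxy 3
    simp [cr] at c3
    rw [hmap]
    simp only [hv]
    ext i
    fin_cases i
    · simp [tw]
    · simp [tw]
    · simp [tw]
    · simp [tw]; ring
    · simp [tw]
    · simp [tw]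
    · simp [tw]

theorem hP_pres (σ : F →+* F) (l k : F) (hl : l ≠ 0) (hk : k ≠ 0) (h1 : σ k = l)
    (h2 : σ l = k ^ 3) : Pres σ (hP l k) := by
  have hmap : (hP l k).map σ = hP (k ^ 3) l := by
    ext i j
    fin_cases i <;> fin_cases j <;> simp [hP, h1, h2]
  have hv : ∀ (l k : F) (x : Fin 7 → F), x ᵥ* hP l k = ![x 0 * k, x 1 * (l * k⁻¹), x 2 * (k^2 * l⁻¹),
    x 3, x 4 * (l * (k⁻¹)^2), x 5 * (k * l⁻¹), x 6 * k⁻¹] := by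
    intro l k x
    ext i
    fin_cases i <;> simp [hP, Matrix.vecMul_diagonal]
  constructor
  · intro x y
    simp only [hv]
    ext i
    fin_cases i <;> simp [cr] <;> field_simp
  · intro x y hxy
    have c3 := congrFun hxy 3
    simp [cr] at c3
    rw [hmap]
    simp only [hv]
    ext i
    fin_cases i <;> simp [tw] <;> field_simp

end ReeAux


namespace ReeAux

variable {F : Type*} [Field F]

/-- The absolute points of the polarity. -/
def Om (σ : F →+* F) (x : Fin 7 → F) : Prop :=
  x ≠ 0 ∧ ∃ y, cr x y = 0 ∧ tw x y = fun i => σ (x i)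

/-- The standard basis vectors. -/
def ee (i : Fin 7) : Fin 7 → F := Pi.single i 1

theorem ee_vecMul (i : Fin 7) (g : Matrix (Fin 7) (Fin 7) F) : ee i ᵥ* g = g i := by
  simp [ee, Matrix.row]

theorem ee_ne (i : Fin 7) : (ee i : Fin 7 → F) ≠ 0 := by
  intro h; simpa [ee] using congrFun h i

theorem Om_e1 (σ : F →+* F) : Om σ (ee 0) := by
  refine ⟨ee_ne 0, ee 1, ?_, ?_⟩
  · ext i; fin_cases i <;> simp [cr, ee]
  · ext i; fin_cases i <;> simp [tw, ee]

theorem Om_e7 (σ : F →+* F) : Om σ (ee 6) := by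
  refine ⟨ee_ne 6, -ee 5, ?_, ?_⟩
  · ext i; fin_cases i <;> simp [cr, ee]
  · ext i; fin_cases i <;> simp [tw, ee]

theorem Om.smul {σ : F →+* F} {x : Fin 7 → F} (hx : Om σ x) {c : F} (hc : c ≠ 0) :
    Om σ (c • x) := by
  obtain ⟨h0, y, h1, h2⟩ := hx
  refine ⟨smul_ne_zero hc h0, (σ c / c) • y, ?_, ?_⟩
  · have : cr (c • x) ((σ c / c) • y) = σ c • cr x y := by
      ext i; fin_cases i <;> simp [cr] <;> field_simp
    rw [this, h1, smul_zero]
  · have : tw (c • x) ((σ c / c) • y) = σ c • tw x y := by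
      ext i; fin_cases i <;> simp [tw] <;> field_simp
    rw [this, h2]; ext i; simp

theorem Om.pres {σ : F →+* F} {x : Fin 7 → F} (hx : Om σ x) {g h : Matrix (Fin 7) (Fin 7) F}
    (hg : Pres σ g) (hh : g * h = 1) : Om σ (x ᵥ* g) := by
  obtain ⟨h0, y, h1, h2⟩ := hx
  refine ⟨?_, y ᵥ* g, ?_, ?_⟩
  · intro h'
    apply h0
    have := congrArg (fun v => v ᵥ* h) h'
    simpa [Matrix.vecMul_vecMul, hh] using this
  · rw [hg.cr_eq, h1, Matrix.zero_vecMul]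
  · rw [hg.tw_eq _ _ h1, h2]
    ext i
    rw [RingHom.map_vecMul]; rfl

theorem Om.zero_case {σ : F →+* F} {x : Fin 7 → F} (hx : Om σ x) (h : x 0 = 0) :
    x = x 6 • ee 6 := by
  obtain ⟨h0, y, hxy, ht⟩ := hx
  have c0 := congrFun hxy 0
  have c1 := congrFun hxy 1
  have c2 := congrFun hxy 2
  have c3 := congrFun hxy 3
  have c4 := congrFun hxy 4
  have c5 := congrFun hxy 5
  have c6 := congrFun hxy 6
  have t0 := congrFun ht 0
  have t1 := congrFun ht 1
  have t2 := congrFun ht 2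
  have t3 := congrFun ht 3
  have t4 := congrFun ht 4
  have t5 := congrFun ht 5
  have t6 := congrFun ht 6
  clear ht hxy
  have h0' : x 1 = 0 → x 2 = 0 → x 3 = 0 → x 4 = 0 → x 5 = 0 → x 6 = 0 → False := by
    intro h1 h2 h3 h4 h5 h6
    apply h0; ext i; fin_cases i <;> assumption
  have fin : x 1 = 0 → x 2 = 0 → x 3 = 0 → x 4 = 0 → x 5 = 0 → x = x 6 • ee 6 := by
    intro h1 h2 h3 h4 h5
    ext i; fin_cases i <;> simp [ee, h, h1, h2, h3, h4, h5]
  simp [cr, tw, h] at c0 c1 c2 c3 c4 c5 c6 t0 t1 t2 t3 t4 t5 t6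
  by_cases y0 : y 0 = 0
  · have x1 : x 1 = 0 := by simpa [y0] using t1.symm
    simp [x1, y0] at c0 c1 c2 c3 c4 c5 c6 t0 t1 t2 t3 t4 t5 t6
    by_cases y1 : y 1 = 0
    · have x2 : x 2 = 0 := by simpa [y1] using t2.symm
      have x3 : x 3 = 0 := by simpa [y1] using t3.symm
      simp [x2, x3, y1] at c0 c1 c2 c3 c4 c5 c6 t0 t1 t2 t3 t4 t5 t6
      by_cases y2 : y 2 = 0
      · have x4 : x 4 = 0 := by simpa [y2] using t4.symm
        simp [x4, y2] at c0 c1 c2 c3 c4 c5 c6 t0 t1 t2 t3 t4 t5 t6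
        by_cases x5 : x 5 = 0
        · exact fin x1 x2 x3 x4 x5
        · have y3 : y 3 = 0 := by simpa [x5] using c5
          simp [y3, x5] at c6
          simp [c6] at t5
          exact absurd ((map_eq_zero σ).mp t5.symm) x5
      · simp [y2] at c3
        simp [c3, y2] at t4
        simp [t4, y2] at c5
        exact (h0' x1 x2 x3 c3 t4 c5).elim
    · simp [y1] at c0
      simp [c0, y1] at t2
      simp [y1] at c1
      simp [c1, y1] at t3
      simp [c1, t2, y1] at c4
      exact (h0' x1 c0 c1 t2 t3 c4).elim
  · simp [y0] at t0
    simp [t0, y0] at t1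
    simp [t0, t1, y0] at c0
    simp [t0, c0, y0] at c1
    simp [t1, c0, y0] at c2
    simp [t0, t1, c1, c2, y0] at c3
    exact (h0' t0 t1 c0 c1 c2 c3).elim

theorem Om.one_case (h3 : (3 : F) = 0) {σ : F →+* F} {x : Fin 7 → F} (hx : Om σ x) (h : x 0 ≠ 0)
    (h1 : x 1 = 0) (h2 : x 2 = 0) (h4 : x 3 = 0) :
    x = x 0 • ee 0 := by
  obtain ⟨h0, y, hxy, ht⟩ := hx
  have c0 := congrFun hxy 0
  have c3 := congrFun hxy 3
  have c4 := congrFun hxy 4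
  have t0 := congrFun ht 0
  have t1 := congrFun ht 1
  have t2 := congrFun ht 2
  have t3 := congrFun ht 3
  simp [cr, tw, h1, h2, h4, h] at c0 c3 c4 t0 t1 t2 t3
  have y1 : y 1 ≠ 0 := by
    intro h'; rw [h'] at t0
    simp at t0; exact h ((map_eq_zero σ).mp t0.symm)
  have x4 : x 4 = 0 := by simpa [y1] using t2
  have x6 : x 6 = 0 := by simpa [y1, x4, c0] using c4
  have x5 : x 5 = 0 := by
    have : x 5 * y 1 = 0 := by
      simp [t1, x6] at c3 t3
      linear_combination (x 5 * y 1) * h3 + c3 + t3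
    simpa [y1] using this
  ext i; fin_cases i <;> simp [ee, h1, h2, h4, x4, x5, x6]

theorem diag_case (h3 : (3 : F) = 0) {σ : F →+* F} {g : Matrix (Fin 7) (Fin 7) F} (hg : Pres σ g)
    {k n : F} (hk : k ≠ 0) (hn : n ≠ 0)
    (h0 : g 0 = k • ee 0) (h6 : g 6 = n • ee 6) : g = hP (σ k) k := by
  have two : (2 : F) ≠ 0 := by
    intro h; apply one_ne_zero (α := F); linear_combination h3 - h
  have key : ∀ z : F, z = -z → z = 0 := by
    intro z hz
    have : 2 * z = 0 := by linear_combination hz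
    simpa [two] using this
  have key' : ∀ z : F, -z = z → z = 0 := fun z hz => key z hz.symm
  have hcr : ∀ i j k, cr (g i) (g j) k = (cr (ee i) (ee j) ᵥ* g) k := by
    intro i j k; rw [← hg.cr_eq]; simp [ee_vecMul]
  have htw : ∀ i j k, cr (ee i) (ee j) = (0 : Fin 7 → F) →
      tw (g i) (g j) k = (tw (ee i) (ee j) ᵥ* g.map σ) k := by
    intro i j k h; rw [← hg.tw_eq _ _ h]; simp [ee_vecMul]
  have g3' : g 3 = (k * n) • ee 3 := by
    ext i
    have := hcr 0 6 i
    rw [h0, h6] at this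
    fin_cases i <;> simp [cr, ee, Matrix.vecMul, dotProduct, Fin.sum_univ_succ] at this ⊢ <;>
      first | exact this | exact this.symm
  have kn : k * n = 1 := by
    have := hcr 0 3 0
    rw [h0, g3'] at this
    simp [cr, ee, Matrix.vecMul, dotProduct, Fin.sum_univ_succ, h0] at this
    have h' : k * (k * n - 1) = 0 := by linear_combination this
    rcases mul_eq_zero.mp h' with h' | h'
    · exact absurd h' hk
    · linear_combination h'
  rw [kn, one_smul] at g3'
  have hA : ∀ i, cr (g i) (g 3) = (cr (ee i) (ee 3) ᵥ* g) := fun i => funext (hcr i 3)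
  have e1 : cr (ee 1) (ee 3) = (ee 1 : Fin 7 → F) := by
    ext i; fin_cases i <;> simp [cr, ee]
  have e2 : cr (ee 2) (ee 3) = (ee 2 : Fin 7 → F) := by
    ext i; fin_cases i <;> simp [cr, ee]
  have e4 : cr (ee 4) (ee 3) = (-ee 4 : Fin 7 → F) := by
    ext i; fin_cases i <;> simp [cr, ee]
  have e5 : cr (ee 5) (ee 3) = (-ee 5 : Fin 7 → F) := by
    ext i; fin_cases i <;> simp [cr, ee]
  have f : ∀ x : Fin 7 → F, cr x (ee 3) = ![-x 0, x 1, x 2, 0, -x 4, -x 5, x 6] := by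
    intro x; ext i; fin_cases i <;> simp [cr, ee]
  have P1 : ∀ x : Fin 7 → F, cr x (ee 3) = x → x 0 = 0 ∧ x 3 = 0 ∧ x 4 = 0 ∧ x 5 = 0 := by
    intro x hx
    rw [f] at hx
    refine ⟨key' _ (congrFun hx 0), (congrFun hx 3).symm, key' _ (congrFun hx 4),
      key' _ (congrFun hx 5)⟩
  have P2 : ∀ x : Fin 7 → F, cr x (ee 3) = -x → x 1 = 0 ∧ x 2 = 0 ∧ x 3 = 0 ∧ x 6 = 0 := by
    intro x hx
    rw [f] at hx
    refine ⟨key _ (congrFun hx 1), key _ (congrFun hx 2), ?_, key _ (congrFun hx 6)⟩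
    have := congrFun hx 3
    simpa using this.symm
  obtain ⟨g10, g13, g14, g15⟩ := P1 (g 1) (by
    have := hA 1; rw [g3', e1, ee_vecMul] at this; exact this)
  obtain ⟨g20, g23, g24, g25⟩ := P1 (g 2) (by
    have := hA 2; rw [g3', e2, ee_vecMul] at this; exact this)
  obtain ⟨g41, g42, g43, g46⟩ := P2 (g 4) (by
    have := hA 4; rw [g3', e4, Matrix.neg_vecMul, ee_vecMul] at this; exact this)
  obtain ⟨g51, g52, g53, g56⟩ := P2 (g 5) (by
    have := hA 5; rw [g3', e5, Matrix.neg_vecMul, ee_vecMul] at this; exact this)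
  have g16 : g 1 6 = 0 := by
    have := hcr 0 1 3
    simpa [h0, cr, ee, Matrix.vecMul, dotProduct, Fin.sum_univ_succ, hk] using this
  have g26 : g 2 6 = 0 := by
    have := hcr 0 2 3
    simpa [h0, cr, ee, Matrix.vecMul, dotProduct, Fin.sum_univ_succ, hk] using this
  have g40 : g 4 0 = 0 := by
    have := hcr 4 6 3
    simpa [h6, cr, ee, Matrix.vecMul, dotProduct, Fin.sum_univ_succ, hn] using this
  have g50 : g 5 0 = 0 := by
    have := hcr 5 6 3
    simpa [h6, cr, ee, Matrix.vecMul, dotProduct, Fin.sum_univ_succ, hn] using this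
  have z01 : cr (ee 0) (ee 1) = (0 : Fin 7 → F) := by
    ext i; fin_cases i <;> simp [cr, ee]
  have z02 : cr (ee 0) (ee 2) = (0 : Fin 7 → F) := by
    ext i; fin_cases i <;> simp [cr, ee]
  have z46 : cr (ee 4) (ee 6) = (0 : Fin 7 → F) := by
    ext i; fin_cases i <;> simp [cr, ee]
  have g21 : g 2 1 = 0 := by
    have := htw 0 2 0 z02
    simpa [h0, tw, ee, Matrix.vecMul, dotProduct, Fin.sum_univ_succ, hk, g10] using this
  have g12 : g 1 2 = 0 := by
    have := htw 0 2 2 z02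
    simpa [h0, tw, ee, Matrix.vecMul, dotProduct, Fin.sum_univ_succ, hk, g10] using this.symm
  have g22 : k * g 2 2 = σ (g 1 1) := by
    have := htw 0 2 1 z02
    simpa [h0, tw, ee, Matrix.vecMul, dotProduct, Fin.sum_univ_succ, hk, g10] using this
  have g11 : k * g 1 1 = σ k := by
    have := htw 0 1 0 z01
    simpa [h0, tw, ee, Matrix.vecMul, dotProduct, Fin.sum_univ_succ, hk, g10] using this
  have g45 : g 4 5 = 0 := by
    have := htw 4 6 6 z46
    simpa [h6, tw, ee, Matrix.vecMul, dotProduct, Fin.sum_univ_succ, hn, g56] using this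
  have g54 : g 5 4 = 0 := by
    have := htw 4 6 4 z46
    simpa [h6, tw, ee, Matrix.vecMul, dotProduct, Fin.sum_univ_succ, hn, g42] using this.symm
  have p15 : g 1 1 * g 5 5 = 1 := by
    have := hcr 1 5 3
    simpa [cr, ee, Matrix.vecMul, dotProduct, Fin.sum_univ_succ, g10, g12, g14, g15, g16, g51, g52,
      g50, g56, g54, g3'] using this
  have p24 : g 2 2 * g 4 4 = 1 := by
    have := hcr 2 4 3
    simpa [cr, ee, Matrix.vecMul, dotProduct, Fin.sum_univ_succ, g20, g21, g24, g25, g26, g41, g42,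
      g40, g46, g45, g3'] using this
  have p12 : g 1 1 * g 2 2 = k := by
    have := hcr 1 2 0
    simpa [cr, ee, Matrix.vecMul, dotProduct, Fin.sum_univ_succ, g20, g21, g24, g25, g26, g41, g42,
      g40, g46, g45, g10, g12, g13, g3', h0] using this
  have hl : σ k ≠ 0 := by simpa using hk
  have v11 : g 1 1 = σ k * k⁻¹ := by field_simp; linear_combination g11
  have v22 : g 2 2 = k ^ 2 * (σ k)⁻¹ := by
    rw [v11] at p12; field_simp at p12 ⊢; linear_combination p12
  have v55 : g 5 5 = k * (σ k)⁻¹ := by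
    rw [v11] at p15; field_simp at p15 ⊢; linear_combination p15
  have v44 : g 4 4 = σ k * (k⁻¹) ^ 2 := by
    rw [v22] at p24; field_simp at p24 ⊢; linear_combination p24
  have vn : n = k⁻¹ := by field_simp; linear_combination kn
  ext i j
  fin_cases i
  · refine (congrFun h0 j).trans ?_; fin_cases j <;> simp [ee, hP]
  · fin_cases j <;> simp [hP, g10, v11, g12, g13, g14, g15, g16]
  · fin_cases j <;> simp [hP, g20, g21, v22, g23, g24, g25, g26]
  · refine (congrFun g3' j).trans ?_; fin_cases j <;> simp [ee, hP]
  · fin_cases j <;> simp [hP, g40, g41, g42, g43, v44, g45, g46]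
  · fin_cases j <;> simp [hP, g50, g51, g52, g53, g54, v55, g56]
  · refine (congrFun h6 j).trans ?_; rw [vn]; fin_cases j <;> simp [ee, hP]

end ReeAux

namespace ReeAux

variable {F : Type*} [Field F]

/-- The pair of field endomorphisms `x ↦ x ^ t` and `x ↦ x ^ (3 t)` and their properties. -/
structure Twist (m : ℕ) (τ σ : F →+* F) : Prop where
  ht : ∀ x, τ x = x ^ (3 ^ m)
  st : ∀ x, σ (τ x) = x
  ts : ∀ x, τ (σ x) = x
  sc : ∀ x, σ x = τ x ^ 3
  h3 : (3 : F) = 0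
  sq : ∀ l : Fˣ, ∃ n : Fˣ, l = n ^ 2 ∨ l = -n ^ 2

theorem exists_twist (m : ℕ) [Fintype F] (hF : Fintype.card F = 3 ^ (2 * m + 1)) :
    ∃ τ σ : F →+* F, Twist m τ σ := by
  have : Fact (Nat.Prime 3) := ⟨Nat.prime_three⟩
  have : CharP F 3 := charP_of_card_eq_prime_pow hF
  refine ⟨iterateFrobenius F 3 m, iterateFrobenius F 3 (m + 1), ?_⟩
  have hq : ∀ x : F, x ^ 3 ^ (2 * m + 1) = x := by
    intro x; rw [← hF]; exact FiniteField.pow_card x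
  constructor
  · intro x; rw [iterateFrobenius_def]
  · intro x
    rw [iterateFrobenius_def, iterateFrobenius_def, ← pow_mul, ← pow_add]
    rw [show m + (m + 1) = 2 * m + 1 by ring]; exact hq x
  · intro x
    rw [iterateFrobenius_def, iterateFrobenius_def, ← pow_mul, ← pow_add]
    rw [show m + 1 + m = 2 * m + 1 by ring]; exact hq x
  · intro x
    rw [iterateFrobenius_def, iterateFrobenius_def, ← pow_mul, pow_succ]
  · have := CharP.cast_eq_zero F 3
    exact_mod_cast this
  · intro l
    classical
    have hm4 : Fintype.card F % 4 = 3 := by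
      rw [hF, pow_add, pow_mul, Nat.mul_mod, Nat.pow_mod]
      norm_num
    have hn : ¬ IsSquare (-1 : F) := by
      rw [FiniteField.isSquare_neg_one_iff]; simp [hm4]
    have hneg : quadraticChar F (-1) = -1 := by
      rcases quadraticChar_dichotomy (F := F) (a := -1) (by simp) with h | h
      · exact absurd ((quadraticChar_one_iff_isSquare (by simp)).mp h) hn
      · exact h
    have lift : ∀ z : Fˣ, IsSquare (z : F) → ∃ n : Fˣ, z = n ^ 2 := by
      rintro z ⟨r, hr⟩
      have hr0 : r ≠ 0 := by
        rintro rfl; simp at hr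
      refine ⟨Units.mk0 r hr0, ?_⟩
      ext; simp [hr, sq]
    rcases quadraticChar_dichotomy (F := F) (a := (l : F)) l.ne_zero with h | h
    · obtain ⟨n, hn⟩ := lift l ((quadraticChar_one_iff_isSquare l.ne_zero).mp h)
      exact ⟨n, Or.inl hn⟩
    · have h' : quadraticChar F ((-l : Fˣ) : F) = 1 := by
        have : ((-l : Fˣ) : F) = (-1) * l := by simp
        rw [this, map_mul, hneg, h]; norm_num
      obtain ⟨n, hn⟩ := lift (-l) ((quadraticChar_one_iff_isSquare (Units.ne_zero _)).mp h')
      exact ⟨n, Or.inr (by rw [← hn, neg_neg])⟩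

theorem det_aP (a A : F) : (aP a A).det = 1 := by
  rw [Matrix.det_of_isUpperTriangular]
  · simp [aP, Fin.prod_univ_succ]
  · intro i j h
    fin_cases i <;> fin_cases j <;> simp [aP] at h ⊢

theorem det_bP (a A : F) : (bP a A).det = 1 := by
  rw [Matrix.det_of_isUpperTriangular]
  · simp [bP, Fin.prod_univ_succ]
  · intro i j h
    fin_cases i <;> fin_cases j <;> simp [bP] at h ⊢

theorem det_cP (a A : F) : (cP a A).det = 1 := by
  rw [Matrix.det_of_isUpperTriangular]
  · simp [cP, Fin.prod_univ_succ]
  · intro i j h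
    fin_cases i <;> fin_cases j <;> simp [cP] at h ⊢

theorem det_hP (l k : F) (hl : l ≠ 0) (hk : k ≠ 0) : (hP l k).det ≠ 0 := by
  rw [hP, Matrix.det_diagonal]
  simp [Fin.prod_univ_succ, hl, hk]

theorem ups_mul_ups : (ups : Matrix (Fin 7) (Fin 7) F) * ups = 1 := by
  ext i j
  fin_cases i <;> fin_cases j <;> simp [ups, Matrix.mul_apply, Fin.sum_univ_succ]

/-- `α(x)` as an element of `GL`. -/
def gA (τ : F →+* F) (x : F) : GL (Fin 7) F :=
  Matrix.GeneralLinearGroup.mkOfDetNeZero (aP x (τ x)) (by rw [det_aP]; exact one_ne_zero)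

/-- `β(x)` as an element of `GL`. -/
def gB (τ : F →+* F) (x : F) : GL (Fin 7) F :=
  Matrix.GeneralLinearGroup.mkOfDetNeZero (bP x (τ x)) (by rw [det_bP]; exact one_ne_zero)

/-- `γ(x)` as an element of `GL`. -/
def gC (τ : F →+* F) (x : F) : GL (Fin 7) F :=
  Matrix.GeneralLinearGroup.mkOfDetNeZero (cP x (τ x)) (by rw [det_cP]; exact one_ne_zero)

/-- `h(l)` as an element of `GL`. -/
def gH (τ : F →+* F) (l : Fˣ) : GL (Fin 7) F :=
  Matrix.GeneralLinearGroup.mkOfDetNeZero (hP (l : F) (τ l))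
    (det_hP _ _ l.ne_zero (by simp))

/-- `Υ` as an element of `GL`. -/
def gU : GL (Fin 7) F := ⟨ups, ups, ups_mul_ups, ups_mul_ups⟩

theorem coe_gA (τ : F →+* F) (x : F) :
    (gA τ x : Matrix (Fin 7) (Fin 7) F) = aP x (τ x) := rfl

theorem coe_gB (τ : F →+* F) (x : F) :
    (gB τ x : Matrix (Fin 7) (Fin 7) F) = bP x (τ x) := rfl

theorem coe_gC (τ : F →+* F) (x : F) :
    (gC τ x : Matrix (Fin 7) (Fin 7) F) = cP x (τ x) := rfl

theorem coe_gH (τ : F →+* F) (l : Fˣ) :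
    (gH τ l : Matrix (Fin 7) (Fin 7) F) = hP (l : F) (τ l) := rfl

theorem coe_gU : ((gU : GL (Fin 7) F) : Matrix (Fin 7) (Fin 7) F) = ups := rfl

theorem amat_eq {m : ℕ} {τ σ : F →+* F} (T : Twist m τ σ)
    (x : F) : amat (3 ^ m) x = aP x (τ x) := by
  have h : ∀ k : ℕ, x ^ (k * 3 ^ m) = τ x ^ k := by
    intro k; rw [T.ht, ← pow_mul, mul_comm]
  simp only [amat, aP, pow_add, h, ← T.ht, pow_one]

theorem bmat_eq {m : ℕ} {τ σ : F →+* F} (T : Twist m τ σ)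
    (x : F) : bmat (3 ^ m) x = bP x (τ x) := by
  have h : ∀ k : ℕ, x ^ (k * 3 ^ m) = τ x ^ k := by
    intro k; rw [T.ht, ← pow_mul, mul_comm]
  simp only [bmat, bP, pow_add, h, ← T.ht, pow_one]

theorem cmat_eq {m : ℕ} {τ σ : F →+* F} (T : Twist m τ σ)
    (x : F) : cmat (3 ^ m) x = cP x (τ x) := by
  have h : ∀ k : ℕ, x ^ (k * 3 ^ m) = τ x ^ k := by
    intro k; rw [T.ht, ← pow_mul, mul_comm]
  simp only [cmat, cP, h, ← T.ht]

theorem hmat_eq {m : ℕ} {τ σ : F →+* F} (T : Twist m τ σ)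
    (l : Fˣ) : hmat (3 ^ m) l = hP (l : F) (τ l) := by
  have h1 : ((l ^ (((3 ^ m : ℕ) : ℤ)) : Fˣ) : F) = τ l := by
    rw [T.ht, zpow_natCast, Units.val_pow_eq_pow_val]
  have hk : τ (l : F) ≠ 0 := by simp
  unfold hmat hP
  congr 1
  ext i
  have key : ∀ a b : ℤ, ((l ^ (a * ((3 ^ m : ℕ) : ℤ) + b) : Fˣ) : F) = (τ l) ^ a * (l : F) ^ b := by
    intro a b
    rw [_root_.zpow_add, mul_comm a, _root_.zpow_mul, Units.val_mul, Units.val_zpow_eq_zpow_val, h1,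
      Units.val_zpow_eq_zpow_val]
  fin_cases i
  · exact h1
  · have := key (-1) 1
    rw [show -1 * ((3 ^ m : ℕ) : ℤ) + 1 = 1 - ((3 ^ m : ℕ) : ℤ) by ring] at this
    simp only [Fin.mk_one, Matrix.cons_val_one, Matrix.cons_val_zero]
    rw [this]; simp [mul_comm]
  · have := key 2 (-1)
    rw [show 2 * ((3 ^ m : ℕ) : ℤ) + (-1) = 2 * ((3 ^ m : ℕ) : ℤ) - 1 by ring] at this
    refine this.trans ?_
    simp
  · rfl
  · have := key (-2) 1
    rw [show -2 * ((3 ^ m : ℕ) : ℤ) + 1 = 1 - 2 * ((3 ^ m : ℕ) : ℤ) by ring] at this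
    refine this.trans ?_
    simp [_root_.zpow_neg, mul_comm]
  · have := key 1 (-1)
    rw [show 1 * ((3 ^ m : ℕ) : ℤ) + (-1) = ((3 ^ m : ℕ) : ℤ) - 1 by ring] at this
    refine this.trans ?_
    simp
  · have := key (-1) 0
    rw [show -1 * ((3 ^ m : ℕ) : ℤ) + 0 = - ((3 ^ m : ℕ) : ℤ) by ring] at this
    refine this.trans ?_
    simp

theorem gA_mem {m : ℕ} {τ σ : F →+* F} (T : Twist m τ σ)
    (x : F) : gA τ x ∈ ReeGroup (F := F) (3 ^ m) :=
  Subgroup.subset_closure (Or.inl ⟨x, by rw [coe_gA, amat_eq T]⟩)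

theorem gB_mem {m : ℕ} {τ σ : F →+* F} (T : Twist m τ σ)
    (x : F) : gB τ x ∈ ReeGroup (F := F) (3 ^ m) :=
  Subgroup.subset_closure (Or.inr (Or.inl ⟨x, by rw [coe_gB, bmat_eq T]⟩))

theorem gC_mem {m : ℕ} {τ σ : F →+* F} (T : Twist m τ σ)
    (x : F) : gC τ x ∈ ReeGroup (F := F) (3 ^ m) :=
  Subgroup.subset_closure (Or.inr (Or.inr (Or.inl ⟨x, by rw [coe_gC, cmat_eq T]⟩)))

theorem gH_mem {m : ℕ} {τ σ : F →+* F} (T : Twist m τ σ)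
    (l : Fˣ) : gH τ l ∈ ReeGroup (F := F) (3 ^ m) :=
  Subgroup.subset_closure (Or.inr (Or.inr (Or.inr (Or.inl ⟨l, by rw [coe_gH, hmat_eq T]⟩))))

theorem gU_mem {m : ℕ}
    : gU ∈ ReeGroup (F := F) (3 ^ m) :=
  Subgroup.subset_closure (Or.inr (Or.inr (Or.inr (Or.inr coe_gU))))

theorem pres_of_mem {m : ℕ} {τ σ : F →+* F} (T : Twist m τ σ)
    {g : GL (Fin 7) F} (hg : g ∈ ReeGroup (F := F) (3 ^ m)) :
    Pres σ (g : Matrix (Fin 7) (Fin 7) F) := by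
  unfold ReeGroup at hg
  induction hg using Subgroup.closure_induction with
  | mem x hx =>
    rcases hx with ⟨a, h⟩ | ⟨a, h⟩ | ⟨a, h⟩ | ⟨a, h⟩ | h
    · rw [h, amat_eq T]; exact aP_pres T.h3 σ _ _ (T.st a) (T.sc a)
    · rw [h, bmat_eq T]; exact bP_pres T.h3 σ _ _ (T.st a) (T.sc a)
    · rw [h, cmat_eq T]; exact cP_pres T.h3 σ _ _ (T.st a) (T.sc a)
    · rw [h, hmat_eq T]; exact hP_pres σ _ _ a.ne_zero (by simp) (T.st a) (T.sc a)
    · rw [h]; exact ups_pres σ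
  | one => exact Pres.one
  | mul x y _ _ hx hy => rw [Units.val_mul]; exact hx.mul hy
  | inv x _ hx => exact hx.inv (by simp) (by simp)

theorem Om_mem {m : ℕ} {τ σ : F →+* F} (T : Twist m τ σ)
    {g : GL (Fin 7) F} (hg : g ∈ ReeGroup (F := F) (3 ^ m)) {x : Fin 7 → F}
    (hx : Om σ x) : Om σ (x ᵥ* (g : Matrix (Fin 7) (Fin 7) F)) :=
  hx.pres (pres_of_mem T hg) (h := ((g⁻¹ : GL (Fin 7) F) : Matrix (Fin 7) (Fin 7) F)) (by simp)

/-- Every absolute point other than `e₇` is moved to `e₁` by some `S(a,b,c)`. -/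
theorem exists_to_e1 {m : ℕ} {τ σ : F →+* F} (T : Twist m τ σ)
    {x : Fin 7 → F} (hx : Om σ x) (h : x 0 ≠ 0) :
    ∃ a b c : F, x ᵥ* ((gA τ a * gB τ b * gC τ c : GL (Fin 7) F) : Matrix (Fin 7) (Fin 7) F)
      = x 0 • ee 0 := by
  obtain ⟨a, ha⟩ : ∃ a, τ a = -x 1 / x 0 := ⟨σ (-x 1 / x 0), T.ts _⟩
  set x' := x ᵥ* (gA τ a : Matrix (Fin 7) (Fin 7) F) with hx'
  obtain ⟨b, hb⟩ : ∃ a, τ a = x' 2 / x 0 := ⟨σ (x' 2 / x 0), T.ts _⟩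
  set x'' := x' ᵥ* (gB τ b : Matrix (Fin 7) (Fin 7) F) with hx''
  obtain ⟨c, hc⟩ : ∃ a, τ a = x'' 3 / x 0 := ⟨σ (x'' 3 / x 0), T.ts _⟩
  set y := x'' ᵥ* (gC τ c : Matrix (Fin 7) (Fin 7) F) with hy
  refine ⟨a, b, c, ?_⟩
  have hxy : x ᵥ* ((gA τ a * gB τ b * gC τ c : GL (Fin 7) F) : Matrix (Fin 7) (Fin 7) F) = y := by
    simp [hy, hx'', hx', Matrix.vecMul_vecMul, Matrix.mul_assoc]
  rw [hxy]
  have hO : Om σ y := Om_mem T (gC_mem T c) (Om_mem T (gB_mem T b) (Om_mem T (gA_mem T a) hx))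
  rw [coe_gA, vec_aP] at hx'
  rw [coe_gB, vec_bP] at hx''
  rw [coe_gC, vec_cP] at hy
  have e0 : x' 0 = x 0 := by rw [hx']; rfl
  have e1 : x' 1 = 0 := by
    have : x' 1 = x 0 * τ a + x 1 := by rw [hx']; rfl
    rw [this, ha]; field_simp; ring
  have f0 : x'' 0 = x 0 := by rw [hx'']; exact e0
  have f1 : x'' 1 = 0 := by rw [hx'']; exact e1
  have f2 : x'' 2 = 0 := by
    have : x'' 2 = -x' 0 * τ b + x' 2 := by rw [hx'']; rfl
    rw [this, hb, e0]; field_simp; ring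
  have y0 : y 0 = x 0 := by rw [hy]; exact f0
  have y1 : y 1 = 0 := by rw [hy]; exact f1
  have y2 : y 2 = 0 := by rw [hy]; exact f2
  have y3 : y 3 = 0 := by
    have : y 3 = -x'' 0 * τ c + x'' 3 := by rw [hy]; rfl
    rw [this, hc, f0]; field_simp; ring
  rw [hO.one_case T.h3 (by rw [y0]; exact h) y1 y2 y3, y0]

/-- The parity version of `exists_to_e1`. -/
theorem exists_to_e1_even {m : ℕ} {τ σ : F →+* F} (T : Twist m τ σ)
    {x : Fin 7 → F} (hx : Om σ x) (h : x 0 ≠ 0) (h1 : x 1 = 0) (h3 : x 3 = 0) :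
    ∃ b : F, x ᵥ* (gB τ b : Matrix (Fin 7) (Fin 7) F) = x 0 • ee 0 := by
  obtain ⟨b, hb⟩ : ∃ a, τ a = x 2 / x 0 := ⟨σ (x 2 / x 0), T.ts _⟩
  refine ⟨b, ?_⟩
  set y := x ᵥ* (gB τ b : Matrix (Fin 7) (Fin 7) F) with hy
  have hO : Om σ y := Om_mem T (gB_mem T b) hx
  rw [coe_gB, vec_bP] at hy
  have y0 : y 0 = x 0 := by rw [hy]; rfl
  have y1 : y 1 = 0 := by rw [hy]; exact h1
  have y2 : y 2 = 0 := by
    have : y 2 = -x 0 * τ b + x 2 := by rw [hy]; rfl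
    rw [this, hb]; field_simp; ring
  have y3 : y 3 = 0 := by
    have : y 3 = x 1 * τ b + x 3 := by rw [hy]; rfl
    rw [this, h1, h3]; ring
  rw [hO.one_case T.h3 (by rw [y0]; exact h) y1 y2 y3, y0]

theorem eq_gH {m : ℕ} {τ σ : F →+* F} (T : Twist m τ σ)
    {g : GL (Fin 7) F} (hg : g ∈ ReeGroup (F := F) (3 ^ m)) {k n : F}
    (h0 : ee 0 ᵥ* (g : Matrix (Fin 7) (Fin 7) F) = k • ee 0)
    (h6 : ee 6 ᵥ* (g : Matrix (Fin 7) (Fin 7) F) = n • ee 6) : ∃ l : Fˣ, g = gH τ l ∧ τ l = k := by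
  have hk : k ≠ 0 := by
    rintro rfl
    rw [zero_smul] at h0
    exact (Om_mem T hg (Om_e1 σ)).1 h0
  have hn : n ≠ 0 := by
    rintro rfl
    rw [zero_smul] at h6
    exact (Om_mem T hg (Om_e7 σ)).1 h6
  rw [ee_vecMul] at h0 h6
  have := diag_case T.h3 (pres_of_mem T hg) hk hn h0 h6
  refine ⟨Units.mk0 (σ k) (by simpa using hk), ?_, T.ts k⟩
  apply Units.ext
  rw [this, coe_gH]
  simp [T.ts]

end ReeAux

namespace ReeAux

variable {F : Type*} [Field F]

theorem upper_aP (a A : F) : (aP a A).IsUpperTriangular := by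
  intro i j h
  fin_cases i <;> fin_cases j <;> simp [aP] at h ⊢

theorem upper_bP (a A : F) : (bP a A).IsUpperTriangular := by
  intro i j h
  fin_cases i <;> fin_cases j <;> simp [bP] at h ⊢

theorem upper_cP (a A : F) : (cP a A).IsUpperTriangular := by
  intro i j h
  fin_cases i <;> fin_cases j <;> simp [cP] at h ⊢

/-- `S(a,b,c)` as an element of `GL`. -/
def gS (τ : F →+* F) (a b c : F) : GL (Fin 7) F := gA τ a * gB τ b * gC τ c

theorem coe_gS (τ : F →+* F) (a b c : F) :
    (gS τ a b c : Matrix (Fin 7) (Fin 7) F) = aP a (τ a) * bP b (τ b) * cP c (τ c) := rfl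

theorem gS_diag (τ : F →+* F) (a b c : F) (i : Fin 7) :
    (gS τ a b c : Matrix (Fin 7) (Fin 7) F) i i = 1 := by
  rw [coe_gS]
  fin_cases i <;> simp [Matrix.mul_apply, Fin.sum_univ_succ, aP, bP, cP]

theorem upper_gS (τ : F →+* F) (a b c : F) :
    (gS τ a b c : Matrix (Fin 7) (Fin 7) F).IsUpperTriangular := by
  rw [coe_gS]
  exact ((upper_aP _ _).mul (upper_bP _ _)).mul (upper_cP _ _)

theorem gS_pow (h3 : (3 : F) = 0) (τ : F →+* F) (a b c : F) : gS τ a b c ^ 9 = 1 := by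
  have : Fact (Nat.Prime 3) := ⟨Nat.prime_three⟩
  have : CharP F 3 := (CharP.charP_iff_prime_eq_zero Nat.prime_three).mpr (by exact_mod_cast h3)
  apply Units.ext
  rw [Units.val_pow_eq_pow_val, Units.val_one]
  set M := (gS τ a b c : Matrix (Fin 7) (Fin 7) F) with hM
  have h1 : M.charpoly = (Polynomial.X - Polynomial.C 1) ^ 7 := by
    rw [Matrix.charpoly_of_isUpperTriangular M (upper_gS τ a b c)]
    simp [hM, gS_diag]
  have h2 := Matrix.aeval_self_charpoly M
  rw [h1] at h2
  simp at h2
  have h4 : (M - 1) ^ 3 ^ 2 = 0 := by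
    rw [show (3 ^ 2 : ℕ) = 7 + 2 by norm_num, pow_add, h2, zero_mul]
  rw [sub_pow_char_pow_of_commute 3 2 (Commute.one_right M)] at h4
  rw [one_pow, sub_eq_zero] at h4
  exact h4

theorem gS_row (τ : F →+* F) (a b c : F) :
    ee 6 ᵥ* (gS τ a b c : Matrix (Fin 7) (Fin 7) F) = ee 6 := by
  rw [ee_vecMul]
  ext j
  by_cases h : j = 6
  · subst h; rw [gS_diag]; simp [ee]
  · rw [upper_gS τ a b c (show id j < id 6 by
      have : j ≤ 6 := Fin.le_last j
      exact lt_of_le_of_ne this h)]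
    simp [ee, h]

theorem gS_col (τ : F →+* F) (a b c : F) :
    (gS τ a b c : Matrix (Fin 7) (Fin 7) F) *ᵥ ee 0 = ee 0 := by
  ext i
  simp only [ee, Matrix.mulVec_single_one, Matrix.col_apply]
  by_cases h : i = 0
  · subst h; rw [gS_diag]; simp
  · rw [upper_gS τ a b c (show id 0 < id i from Fin.pos_of_ne_zero h)]
    simp [h]

theorem vec_inv {g : GL (Fin 7) F} {x y : Fin 7 → F}
    (h : x ᵥ* (g : Matrix (Fin 7) (Fin 7) F) = y) :
    y ᵥ* ((g⁻¹ : GL (Fin 7) F) : Matrix (Fin 7) (Fin 7) F) = x := by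
  rw [← h, Matrix.vecMul_vecMul, ← Units.val_mul]; simp

theorem vec_mul (g k : GL (Fin 7) F) (x : Fin 7 → F) :
    x ᵥ* ((g * k : GL (Fin 7) F) : Matrix (Fin 7) (Fin 7) F) =
      (x ᵥ* (g : Matrix (Fin 7) (Fin 7) F)) ᵥ* (k : Matrix (Fin 7) (Fin 7) F) := by
  rw [Matrix.vecMul_vecMul, Units.val_mul]

theorem gH_mul (τ : F →+* F) (l k : Fˣ) : gH τ (l * k) = gH τ l * gH τ k := by
  apply Units.ext
  rw [Units.val_mul, coe_gH, coe_gH, coe_gH, hP, hP, hP, Matrix.diagonal_mul_diagonal]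
  congr 1
  ext i
  fin_cases i <;> simp <;> ring

theorem gH_one (τ : F →+* F) : gH τ 1 = 1 := by
  have := gH_mul τ 1 1
  simpa using this

theorem gH_inv (τ : F →+* F) (l : Fˣ) : gH τ l⁻¹ = (gH τ l)⁻¹ := by
  rw [eq_inv_iff_mul_eq_one, ← gH_mul, inv_mul_cancel, gH_one]

theorem gU_sq : (gU : GL (Fin 7) F) * gU = 1 := Units.ext ups_mul_ups

theorem gU_gH (τ : F →+* F) (l : Fˣ) : gU * gH τ l = gH τ l⁻¹ * gU := by
  apply Units.ext
  rw [Units.val_mul, Units.val_mul, coe_gH, coe_gH, coe_gU, hP, hP]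
  ext i j
  rw [Matrix.mul_diagonal, Matrix.diagonal_mul]
  fin_cases i <;> fin_cases j <;> simp [ups, mul_comm]

theorem vec_gU (x : Fin 7 → F) : x ᵥ* ((gU : GL (Fin 7) F) : Matrix (Fin 7) (Fin 7) F) =
    ![-x 6, -x 5, -x 4, -x 3, -x 2, -x 1, -x 0] := by
  ext i
  fin_cases i <;> simp [coe_gU, ups, Matrix.vecMul, dotProduct, Fin.sum_univ_succ]

theorem e1_gU : ee 0 ᵥ* ((gU : GL (Fin 7) F) : Matrix (Fin 7) (Fin 7) F) = - ee 6 := by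
  rw [vec_gU]; ext i; fin_cases i <;> simp [ee]

theorem e7_gU : ee 6 ᵥ* ((gU : GL (Fin 7) F) : Matrix (Fin 7) (Fin 7) F) = - ee 0 := by
  rw [vec_gU]; ext i; fin_cases i <;> simp [ee]

/-- The involution `h(-1)`. -/
def j0 (τ : F →+* F) : GL (Fin 7) F := gH τ (-1)

theorem coe_j0 (τ : F →+* F) : (j0 τ : Matrix (Fin 7) (Fin 7) F) =
    Matrix.diagonal ![-1, 1, -1, 1, -1, 1, -1] := by
  rw [j0, coe_gH, hP]; congr 1
  ext i; fin_cases i <;> simp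

theorem j0_sq (τ : F →+* F) : j0 τ * j0 τ = 1 := by
  rw [j0, ← gH_mul]; simp [gH_one]

theorem gl_ext {g k : GL (Fin 7) F} (h : ∀ x : Fin 7 → F,
    x ᵥ* (g : Matrix (Fin 7) (Fin 7) F) = x ᵥ* (k : Matrix (Fin 7) (Fin 7) F)) : g = k := by
  apply Units.ext
  ext i j
  have := congrFun (h (ee i)) j
  rwa [ee_vecMul, ee_vecMul] at this

theorem vec_j0 (τ : F →+* F) (y : Fin 7 → F) : y ᵥ* (j0 τ : Matrix (Fin 7) (Fin 7) F) =
      ![-y 0, y 1, -y 2, y 3, -y 4, y 5, -y 6] := by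
  rw [coe_j0]
  ext i
  rw [Matrix.vecMul_diagonal]
  fin_cases i <;> simp

theorem conj_one (h3 : (3 : F) = 0) (τ : F →+* F) :
    (gA τ 1 * gU * gB τ 1 * gU * gC τ 1) * gU = j0 τ * (gA τ 1 * gU * gB τ 1 * gU * gC τ 1) := by
  apply gl_ext
  intro x
  have hj : ∀ y : Fin 7 → F, y ᵥ* (j0 τ : Matrix (Fin 7) (Fin 7) F) =
      ![-y 0, y 1, -y 2, y 3, -y 4, y 5, -y 6] := vec_j0 τ
  simp only [vec_mul, coe_gA, coe_gB, coe_gC, map_one, vec_aP, vec_bP, vec_cP, vec_gU, hj]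
  ext i
  fin_cases i <;> simp <;> grind

theorem conj_two (h3 : (3 : F) = 0) (τ : F →+* F) :
    (gC τ 1 * gU * gB τ 1 * gU * gA τ 1) * (j0 τ * gU) =
      j0 τ * (gC τ 1 * gU * gB τ 1 * gU * gA τ 1) := by
  apply gl_ext
  intro x
  have hj : ∀ y : Fin 7 → F, y ᵥ* (j0 τ : Matrix (Fin 7) (Fin 7) F) =
      ![-y 0, y 1, -y 2, y 3, -y 4, y 5, -y 6] := vec_j0 τ
  simp only [vec_mul, coe_gA, coe_gB, coe_gC, map_one, vec_aP, vec_bP, vec_cP, vec_gU, hj]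
  ext i
  fin_cases i <;> simp <;> grind


end ReeAux

namespace ReeAux

variable {F : Type*} [Field F]

theorem gS_mem {m : ℕ} {τ σ : F →+* F} (T : Twist m τ σ) (a b c : F) :
    gS τ a b c ∈ ReeGroup (F := F) (3 ^ m) :=
  mul_mem (mul_mem (gA_mem T a) (gB_mem T b)) (gC_mem T c)

theorem vec_eq_zero (g : GL (Fin 7) F) {x : Fin 7 → F}
    (h : x ᵥ* (g : Matrix (Fin 7) (Fin 7) F) = 0) : x = 0 := by
  have := vec_inv h
  rw [Matrix.zero_vecMul] at this
  exact this.symm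

theorem coord_ne_zero {m : ℕ} {τ σ : F →+* F} (T : Twist m τ σ) {g : GL (Fin 7) F}
    (hg : g ∈ ReeGroup (F := F) (3 ^ m)) {n : F}
    (h6 : ee 6 ᵥ* (g : Matrix (Fin 7) (Fin 7) F) = n • ee 6) :
    (ee 0 ᵥ* (g : Matrix (Fin 7) (Fin 7) F)) 0 ≠ 0 := by
  intro h0
  have hO := (Om_mem T hg (Om_e1 (σ := σ))).zero_case h0
  set y := (ee 0 ᵥ* (g : Matrix (Fin 7) (Fin 7) F)) 6 with hy
  have h1 : (n • ee 0 - y • ee 6 : Fin 7 → F) = 0 := by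
    apply vec_eq_zero g
    rw [Matrix.sub_vecMul, Matrix.smul_vecMul, Matrix.smul_vecMul, hO, h6, smul_smul, smul_smul,
      mul_comm, sub_self]
  have h2 := congrFun h1 0
  simp [ee] at h2
  rw [h2, zero_smul] at h6
  exact ee_ne _ (vec_eq_zero g h6)

theorem borel {m : ℕ} {τ σ : F →+* F} (T : Twist m τ σ) {g : GL (Fin 7) F}
    (hg : g ∈ ReeGroup (F := F) (3 ^ m)) {n : F}
    (h6 : ee 6 ᵥ* (g : Matrix (Fin 7) (Fin 7) F) = n • ee 6) :
    ∃ l a b c, g = gH τ l * (gS τ a b c)⁻¹ := by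
  obtain ⟨a, b, c, h⟩ := exists_to_e1 T (Om_mem T hg (Om_e1 (σ := σ))) (coord_ne_zero T hg h6)
  change _ ᵥ* (gS τ a b c : Matrix (Fin 7) (Fin 7) F) = _ at h
  rw [← vec_mul] at h
  have h7 : ee 6 ᵥ* ((g * gS τ a b c : GL (Fin 7) F) : Matrix (Fin 7) (Fin 7) F) = n • ee 6 := by
    rw [vec_mul, h6, Matrix.smul_vecMul, gS_row]
  obtain ⟨l, hl, -⟩ := eq_gH T (mul_mem hg (gS_mem T a b c)) h h7
  exact ⟨l, a, b, c, by rw [← hl, mul_inv_cancel_right]⟩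

theorem col_inv {g : GL (Fin 7) F} {x y : Fin 7 → F}
    (h : (g : Matrix (Fin 7) (Fin 7) F) *ᵥ x = y) :
    ((g⁻¹ : GL (Fin 7) F) : Matrix (Fin 7) (Fin 7) F) *ᵥ y = x := by
  rw [← h, Matrix.mulVec_mulVec, ← Units.val_mul]; simp

theorem gH_col (τ : F →+* F) (l : Fˣ) :
    (gH τ l : Matrix (Fin 7) (Fin 7) F) *ᵥ ee 0 = τ l • ee 0 := by
  rw [coe_gH, hP]
  ext i
  rw [Matrix.mulVec_diagonal]
  fin_cases i <;> simp [ee]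

theorem grp_one {G : Type*} [Group G] {v : G} (h : v * v = 1) (h9 : v ^ 9 = 1) : v = 1 := by
  have : v ^ 9 = (v * v) ^ 4 * v := by rw [← sq, ← pow_mul, ← pow_succ]
  rw [h9, h, one_pow, one_mul] at this
  exact this.symm

theorem grp_two {G : Type*} [Group G] {v : G} (h9 : v ^ 9 = 1) : v⁻¹ ^ 5 * v = v ^ 5 := by
  rw [inv_pow, inv_mul_eq_iff_eq_mul, ← pow_add, pow_succ, h9, one_mul]

theorem conj_case_a {m : ℕ} {τ σ : F →+* F} (T : Twist m τ σ) {j : GL (Fin 7) F}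
    (hj : j ∈ ReeGroup (F := F) (3 ^ m)) (hjj : j * j = 1) (hne : j ≠ 1) {n : F}
    (h6 : ee 6 ᵥ* (j : Matrix (Fin 7) (Fin 7) F) = n • ee 6) :
    ∃ k ∈ ReeGroup (F := F) (3 ^ m), k * j = j0 τ * k := by
  obtain ⟨l, a, b, c, h⟩ := borel T hj h6
  have hv9 : ((gS τ a b c)⁻¹) ^ 9 = 1 := by rw [inv_pow, gS_pow T.h3, inv_one]
  have hvm := inv_mem (gS_mem T a b c)
  have hcol : ((gS τ a b c)⁻¹ : GL (Fin 7) F) *ᵥ ee 0 = (ee 0 : Fin 7 → F) :=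
    col_inv (gS_col τ a b c)
  have hl : l = 1 ∨ l = -1 := by
    have h1 : (j : Matrix (Fin 7) (Fin 7) F) *ᵥ ee 0 = τ l • ee 0 := by
      rw [h, Units.val_mul, ← Matrix.mulVec_mulVec]
      rw [hcol, gH_col]
    have h2 : ((j * j : GL (Fin 7) F) : Matrix (Fin 7) (Fin 7) F) *ᵥ ee 0 =
        (τ l * τ l) • ee 0 := by
      rw [Units.val_mul, ← Matrix.mulVec_mulVec, h1, Matrix.mulVec_smul, h1, smul_smul]
    rw [hjj, Units.val_one, Matrix.one_mulVec] at h2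
    have h3 := congrFun h2 0
    simp [ee] at h3
    rw [← map_mul] at h3
    have h4 : (l : F) * l = 1 := τ.injective (by rw [map_one]; exact h3.symm)
    rcases mul_self_eq_one_iff.mp h4 with h5 | h5
    · left; exact Units.ext h5
    · right; exact Units.ext h5
  generalize (gS τ a b c)⁻¹ = v at h hv9 hvm hcol
  rcases hl with rfl | rfl
  · rw [gH_one, one_mul] at h
    subst h
    exfalso
    apply hne
    exact grp_one hjj hv9
  · change j = j0 τ * v at h
    refine ⟨v ^ 5, pow_mem hvm 5, ?_⟩
    have h1 : v * j0 τ = j0 τ * v⁻¹ := by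
      rw [h] at hjj
      have : j0 τ * (j0 τ * v * (j0 τ * v)) * v⁻¹ = (j0 τ * j0 τ) * (v * j0 τ) := by group
      rw [j0_sq, one_mul] at this
      rw [← this, hjj, mul_one]
    have h2 : SemiconjBy (j0 τ) (v⁻¹) v := h1.symm
    have h3 := h2.pow_right 5
    have h4 : v ^ 5 * j0 τ = j0 τ * v⁻¹ ^ 5 := h3.symm
    rw [h, ← mul_assoc, h4, mul_assoc]
    rw [grp_two hv9]

theorem conj_case_b {m : ℕ} {τ σ : F →+* F} (T : Twist m τ σ) {j : GL (Fin 7) F}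
    (hj : j ∈ ReeGroup (F := F) (3 ^ m)) (hjj : j * j = 1)
    (h6 : (ee 6 ᵥ* (j : Matrix (Fin 7) (Fin 7) F)) 0 ≠ 0) :
    ∃ k ∈ ReeGroup (F := F) (3 ^ m), k * j = j0 τ * k := by
  have hj0 : j0 τ ∈ ReeGroup (F := F) (3 ^ m) := gH_mem T (-1)
  have hUm : (gU : GL (Fin 7) F) ∈ ReeGroup (F := F) (3 ^ m) := gU_mem
  obtain ⟨a, b, c, h⟩ := exists_to_e1 T (Om_mem T hj (Om_e7 (σ := σ))) h6
  set k := (ee 6 ᵥ* (j : Matrix (Fin 7) (Fin 7) F)) 0 with hk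
  change _ ᵥ* (gS τ a b c : Matrix (Fin 7) (Fin 7) F) = _ at h
  have hu := gS_mem T a b c
  have hrow := gS_row τ a b c
  generalize gS τ a b c = u at h hu hrow
  have hrow' := vec_inv hrow
  have e7 : ee 6 ᵥ* ((u⁻¹ * j * u : GL (Fin 7) F) : Matrix (Fin 7) (Fin 7) F) = k • ee 0 := by
    rw [vec_mul, vec_mul, hrow', h]
  have hinv : (u⁻¹ * j * u)⁻¹ = u⁻¹ * j * u := by
    rw [inv_eq_iff_mul_eq_one]
    calc u⁻¹ * j * u * (u⁻¹ * j * u) = u⁻¹ * (j * j) * u := by group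
      _ = 1 := by rw [hjj]; group
  have e1 : ee 0 ᵥ* ((u⁻¹ * j * u : GL (Fin 7) F) : Matrix (Fin 7) (Fin 7) F) = k⁻¹ • ee 6 := by
    have := vec_inv e7
    rw [hinv, Matrix.smul_vecMul] at this
    rw [← this, smul_smul, inv_mul_cancel₀ h6, one_smul]
  have hm' : u⁻¹ * j * u * gU ∈ ReeGroup (F := F) (3 ^ m) :=
    mul_mem (mul_mem (mul_mem (inv_mem hu) hj) hu) hUm
  obtain ⟨l, hl, -⟩ := eq_gH T hm' (k := -k⁻¹) (n := -k)
    (by rw [vec_mul, e1, Matrix.smul_vecMul, e7_gU, smul_neg, neg_smul])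
    (by rw [vec_mul, e7, Matrix.smul_vecMul, e1_gU, smul_neg, neg_smul])
  have hj' : u⁻¹ * j * u = gH τ l * gU := by
    rw [← hl, mul_assoc _ gU gU, gU_sq, mul_one]
  have fin : ∀ K w : GL (Fin 7) F, K ∈ ReeGroup (F := F) (3 ^ m) → w ∈ ReeGroup (F := F) (3 ^ m) →
      K * (w⁻¹ * (u⁻¹ * j * u) * w) = j0 τ * K →
      ∃ k ∈ ReeGroup (F := F) (3 ^ m), k * j = j0 τ * k := by
    intro K w hK hw hh
    refine ⟨K * w⁻¹ * u⁻¹, mul_mem (mul_mem hK (inv_mem hw)) (inv_mem hu), ?_⟩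
    rw [← mul_assoc (j0 τ), ← mul_assoc (j0 τ), ← hh]
    group
  have hc : ∀ n : Fˣ, (gH τ n)⁻¹ * (gH τ (n ^ 2) * gU) * gH τ n = gU := by
    intro n
    rw [mul_assoc, mul_assoc (gH τ (n ^ 2)), gU_gH, ← mul_assoc, ← mul_assoc, ← gH_inv, ← gH_mul,
      ← gH_mul, show n⁻¹ * n ^ 2 * n⁻¹ = 1 by group, gH_one, one_mul]
  obtain ⟨n, rfl | rfl⟩ := T.sq l
  · refine fin _ (gH τ n) ?_ (gH_mem T n) (by rw [hj', hc]; exact conj_one T.h3 τ)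
    exact mul_mem (mul_mem (mul_mem (mul_mem (gA_mem T 1) hUm) (gB_mem T 1)) hUm) (gC_mem T 1)
  · refine fin (gC τ 1 * gU * gB τ 1 * gU * gA τ 1) (gH τ n) ?_ (gH_mem T n) ?_
    · exact mul_mem (mul_mem (mul_mem (mul_mem (gC_mem T 1) hUm) (gB_mem T 1)) hUm) (gA_mem T 1)
    · rw [hj', ← conj_two T.h3 τ]
      congr 1
      rw [show (gH τ (-n ^ 2)) = j0 τ * gH τ (n ^ 2) by rw [j0, ← gH_mul]; simp]
      have hcomm : (gH τ n)⁻¹ * j0 τ = j0 τ * (gH τ n)⁻¹ := by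
        rw [j0, ← gH_inv, ← gH_mul, ← gH_mul, mul_comm]
      rw [mul_assoc (j0 τ), ← mul_assoc _ (j0 τ), hcomm, mul_assoc (j0 τ), mul_assoc (j0 τ), hc]

theorem conj_j0 {m : ℕ} {τ σ : F →+* F} (T : Twist m τ σ) {j : GL (Fin 7) F}
    (hj : j ∈ ReeGroup (F := F) (3 ^ m)) (hjj : j * j = 1) (hne : j ≠ 1) :
    ∃ k ∈ ReeGroup (F := F) (3 ^ m), k * j = j0 τ * k := by
  by_cases h : (ee 6 ᵥ* (j : Matrix (Fin 7) (Fin 7) F)) 0 = 0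
  · exact conj_case_a T hj hjj hne ((Om_mem T hj (Om_e7 (σ := σ))).zero_case h)
  · exact conj_case_b T hj hjj h

end ReeAux

namespace ReeAux

variable {F : Type*} [Field F]

/-- The image of a `2 × 2` matrix under the representation on the 7-dimensional module. -/
def phiM (M N : Matrix (Fin 2) (Fin 2) F) : Matrix (Fin 7) (Fin 7) F :=
  !![M 0 0 * N 0 0, 0, -(M 0 0 * N 0 1), 0, -(M 0 1 * N 0 0), 0, -(M 0 1 * N 0 1);
     0, N 0 0 ^ 2, 0, N 0 0 * N 0 1, 0, -N 0 1 ^ 2, 0;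
     -(M 0 0 * N 1 0), 0, M 0 0 * N 1 1, 0, M 0 1 * N 1 0, 0, M 0 1 * N 1 1;
     0, -(N 0 0 * N 1 0), 0, N 0 0 * N 1 1 + N 0 1 * N 1 0, 0, N 0 1 * N 1 1, 0;
     -(M 1 0 * N 0 0), 0, M 1 0 * N 0 1, 0, M 1 1 * N 0 0, 0, M 1 1 * N 0 1;
     0, -N 1 0 ^ 2, 0, -(N 1 0 * N 1 1), 0, N 1 1 ^ 2, 0;
     -(M 1 0 * N 1 0), 0, M 1 0 * N 1 1, 0, M 1 1 * N 1 0, 0, M 1 1 * N 1 1]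

theorem vec_phiM (M N : Matrix (Fin 2) (Fin 2) F) (x : Fin 7 → F) : x ᵥ* phiM M N =
    ![x 0 * (M 0 0 * N 0 0) - x 2 * (M 0 0 * N 1 0) - x 4 * (M 1 0 * N 0 0) -
        x 6 * (M 1 0 * N 1 0),
      x 1 * N 0 0 ^ 2 - x 3 * (N 0 0 * N 1 0) - x 5 * N 1 0 ^ 2,
      -x 0 * (M 0 0 * N 0 1) + x 2 * (M 0 0 * N 1 1) + x 4 * (M 1 0 * N 0 1) +
        x 6 * (M 1 0 * N 1 1),
      x 1 * (N 0 0 * N 0 1) + x 3 * (N 0 0 * N 1 1 + N 0 1 * N 1 0) - x 5 * (N 1 0 * N 1 1),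
      -x 0 * (M 0 1 * N 0 0) + x 2 * (M 0 1 * N 1 0) + x 4 * (M 1 1 * N 0 0) +
        x 6 * (M 1 1 * N 1 0),
      -x 1 * N 0 1 ^ 2 + x 3 * (N 0 1 * N 1 1) + x 5 * N 1 1 ^ 2,
      -x 0 * (M 0 1 * N 0 1) + x 2 * (M 0 1 * N 1 1) + x 4 * (M 1 1 * N 0 1) +
        x 6 * (M 1 1 * N 1 1)] := by
  ext i
  fin_cases i <;>
  simp [phiM, Matrix.vecMul, dotProduct, Fin.sum_univ_succ] <;> ring

theorem phiM_mul (h3 : (3 : F) = 0) (M N M' N' : Matrix (Fin 2) (Fin 2) F) :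
    phiM (M * M') (N * N') = phiM M N * phiM M' N' := by
  ext i j
  suffices h : ∀ x : Fin 7 → F, x ᵥ* phiM (M * M') (N * N') = x ᵥ* (phiM M N * phiM M' N') by
    have := congrFun (h (ee i)) j
    rwa [ee_vecMul, ee_vecMul] at this
  intro x
  rw [← Matrix.vecMul_vecMul]
  simp only [vec_phiM, Matrix.mul_apply, Fin.sum_univ_two]
  ext i
  fin_cases i
  · simp; ring
  · simp; linear_combination (x 1 * N 0 0 * N' 0 0 * N 0 1 * N' 1 0 -
      N' 0 0 * N' 1 0 * N 1 0 * N 1 1 * x 5) * h3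
  · simp; ring
  · simp; linear_combination (N 0 0 * N' 0 0 * N' 0 1 * x 3 * N 1 0 +
      N 0 1 * N' 1 0 * N' 1 1 * x 3 * N 1 1) * h3
  · simp; ring
  · simp; linear_combination (N' 0 1 * N' 1 1 * N 1 0 * N 1 1 * x 5 -
      x 1 * N 0 0 * N' 0 1 * N 0 1 * N' 1 1) * h3
  · simp; ring

theorem phiM_one : phiM (1 : Matrix (Fin 2) (Fin 2) F) 1 = 1 := by
  ext i j
  fin_cases i <;> fin_cases j <;> simp [phiM]

/-- The representation of `SL(2)` as a monoid homomorphism into matrices. -/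
def phi0 (h3 : (3 : F) = 0) (τ : F →+* F) :
    Matrix.SpecialLinearGroup (Fin 2) F →* Matrix (Fin 7) (Fin 7) F where
  toFun M := phiM M.1 (M.1.map τ)
  map_one' := by simp [phiM_one, Matrix.map_one]
  map_mul' M M' := by
    rw [← phiM_mul h3, ← Matrix.map_mul]; rfl

/-- The representation of `SL(2)` as a homomorphism into `GL(7)`. -/
def phi (h3 : (3 : F) = 0) (τ : F →+* F) :
    Matrix.SpecialLinearGroup (Fin 2) F →* GL (Fin 7) F := (phi0 h3 τ).toHomUnits

theorem coe_phi (h3 : (3 : F) = 0) (τ : F →+* F) (M : Matrix.SpecialLinearGroup (Fin 2) F) :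
    (phi h3 τ M : Matrix (Fin 7) (Fin 7) F) = phiM M.1 (M.1.map τ) := rfl

end ReeAux

namespace ReeAux

variable {F : Type*} [Field F]

/-- Upper unitriangular element of `SL(2)`. -/
def sU (x : F) : Matrix.SpecialLinearGroup (Fin 2) F :=
  ⟨!![1, x; 0, 1], by simp [Matrix.det_fin_two]⟩

/-- Diagonal element of `SL(2)`. -/
def sD (u : Fˣ) : Matrix.SpecialLinearGroup (Fin 2) F :=
  ⟨!![(u : F), 0; 0, (u : F)⁻¹], by simp [Matrix.det_fin_two]⟩

/-- The Weyl element of `SL(2)`. -/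
def sW : Matrix.SpecialLinearGroup (Fin 2) F :=
  ⟨!![0, 1; -1, 0], by simp [Matrix.det_fin_two]⟩

theorem coe_sU (x : F) : (sU x : Matrix (Fin 2) (Fin 2) F) = !![1, x; 0, 1] := rfl

theorem coe_sD (u : Fˣ) : (sD u : Matrix (Fin 2) (Fin 2) F) = !![(u : F), 0; 0, (u : F)⁻¹] := rfl

theorem coe_sW : ((sW : Matrix.SpecialLinearGroup (Fin 2) F) : Matrix (Fin 2) (Fin 2) F) =
    !![0, 1; -1, 0] := rfl

theorem phi_sU (h3 : (3 : F) = 0) (τ : F →+* F) (x : F) : phi h3 τ (sU x) = gB τ x := by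
  apply Units.ext
  rw [coe_phi, coe_gB]
  ext i j
  fin_cases i <;> fin_cases j <;> simp [phiM, bP, sU, mul_comm]

theorem phi_sW (h3 : (3 : F) = 0) (τ : F →+* F) : phi h3 τ sW = gU := by
  apply Units.ext
  rw [coe_phi, coe_gU]
  ext i j
  fin_cases i <;> fin_cases j <;> simp [phiM, ups, sW]

theorem phi_sD {m : ℕ} {τ σ : F →+* F} (T : Twist m τ σ) (u : Fˣ) :
    phi T.h3 τ (sD u) = gH τ (Units.map σ u * u) := by
  apply Units.ext
  rw [coe_phi, coe_gH]
  have hu : (u : F) ≠ 0 := u.ne_zero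
  have ht : τ (u : F) ≠ 0 := by simp
  have ht2 : τ (τ (u : F)) ^ 3 = u := by rw [← T.sc, T.st]
  have ht6 : τ (τ (u : F)) ^ 6 = (u : F) ^ 2 := by
    rw [show 6 = 3 * 2 by norm_num, pow_mul, ht2]
  ext i j
  fin_cases i <;> fin_cases j <;> simp [phiM, hP, sD, T.sc] <;> field_simp <;>
    simp [ht2, ht6]

theorem phi_comm (h3 : (3 : F) = 0) (τ : F →+* F) (M : Matrix.SpecialLinearGroup (Fin 2) F) :
    phi h3 τ M * j0 τ = j0 τ * phi h3 τ M := by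
  apply gl_ext
  intro x
  rw [vec_mul, vec_mul, coe_phi]
  simp only [vec_phiM, vec_j0]
  ext i
  fin_cases i <;> simp <;> ring

theorem phi_mem {m : ℕ} {τ σ : F →+* F} (T : Twist m τ σ)
    (M : Matrix.SpecialLinearGroup (Fin 2) F) :
    phi T.h3 τ M ∈ ReeGroup (F := F) (3 ^ m) := by
  have hD : ∀ u : Fˣ, phi T.h3 τ (sD u) ∈ ReeGroup (F := F) (3 ^ m) := by
    intro u; rw [phi_sD T]; exact gH_mem T _
  have hU : ∀ x : F, phi T.h3 τ (sU x) ∈ ReeGroup (F := F) (3 ^ m) := by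
    intro u; rw [phi_sU]; exact gB_mem T _
  have hW : phi T.h3 τ sW ∈ ReeGroup (F := F) (3 ^ m) := by
    rw [phi_sW]; exact gU_mem
  have hdet := M.2
  rw [Matrix.det_fin_two] at hdet
  by_cases hr : M.1 1 0 = 0
  · rw [hr, mul_zero, sub_zero] at hdet
    have hp : M.1 0 0 ≠ 0 := left_ne_zero_of_mul_eq_one hdet
    have : M = sD (Units.mk0 _ hp) * sU (M.1 0 1 / M.1 0 0) := by
      apply Subtype.ext
      rw [Matrix.SpecialLinearGroup.coe_mul, coe_sD, coe_sU]
      ext i j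
      fin_cases i <;> fin_cases j <;> simp [Matrix.mul_apply, Fin.sum_univ_two]
      · field_simp
      · exact hr
      · exact eq_inv_of_mul_eq_one_right hdet
    rw [this, map_mul]
    exact mul_mem (hD _) (hU _)
  · have : M = sU (M.1 0 0 / M.1 1 0) * sD (Units.mk0 (-(M.1 1 0)⁻¹) (by simp [hr])) * sW *
        sU (M.1 1 1 / M.1 1 0) := by
      apply Subtype.ext
      simp only [Matrix.SpecialLinearGroup.coe_mul, coe_sD, coe_sU, coe_sW]
      ext i j
      fin_cases i <;> fin_cases j <;> simp [Matrix.mul_apply, Fin.sum_univ_two] <;>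
        field_simp
      linear_combination -hdet
    rw [this, map_mul, map_mul, map_mul]
    exact mul_mem (mul_mem (mul_mem (hU _) (hD _)) hW) (hU _)

theorem j0_entry (τ : F →+* F) (x : Fin 7 → F) (h3 : (3 : F) = 0)
    (h : x ᵥ* (j0 τ : Matrix (Fin 7) (Fin 7) F) = -x) : x 1 = 0 ∧ x 3 = 0 := by
  rw [vec_j0] at h
  have h1 := congrFun h 1
  have h2 := congrFun h 3
  simp at h1 h2
  constructor
  · linear_combination (x 1) * h3 - h1
  · linear_combination (x 3) * h3 - h2

theorem ee_j0 (τ : F →+* F) : ee 0 ᵥ* (j0 τ : Matrix (Fin 7) (Fin 7) F) = - ee 0 ∧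
    ee 6 ᵥ* (j0 τ : Matrix (Fin 7) (Fin 7) F) = - ee 6 := by
  constructor <;> rw [vec_j0] <;> ext i <;> fin_cases i <;> simp [ee]

theorem gH_sq_eq {m : ℕ} {τ σ : F →+* F} (T : Twist m τ σ) (n : Fˣ) :
    ∃ M, gH τ (n ^ 2) = phi T.h3 τ M := by
  refine ⟨sD (Units.map σ n * n⁻¹), ?_⟩
  rw [phi_sD T]
  congr 1
  ext
  have hn : (n : F) ≠ 0 := n.ne_zero
  have hs : σ (n : F) ≠ 0 := by simp
  have : σ (σ (n : F)) = (n : F) ^ 3 := by rw [T.sc (σ n), T.ts]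
  simp [this]
  field_simp

theorem cent_case {m : ℕ} {τ σ : F →+* F} (T : Twist m τ σ) {g : GL (Fin 7) F}
    (hg : g ∈ ReeGroup (F := F) (3 ^ m)) (hc : g * j0 τ = j0 τ * g) {n : F}
    (h6 : ee 6 ᵥ* (g : Matrix (Fin 7) (Fin 7) F) = n • ee 6) :
    ∃ M, g = phi T.h3 τ M ∨ g = j0 τ * phi T.h3 τ M := by
  have hj : (ee 0 ᵥ* (g : Matrix (Fin 7) (Fin 7) F)) ᵥ* (j0 τ : Matrix (Fin 7) (Fin 7) F) =
      -(ee 0 ᵥ* (g : Matrix (Fin 7) (Fin 7) F)) := by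
    rw [← vec_mul, hc, vec_mul, (ee_j0 τ).1, Matrix.neg_vecMul]
  obtain ⟨h1, h3⟩ := j0_entry τ _ T.h3 hj
  obtain ⟨b, h⟩ := exists_to_e1_even T (Om_mem T hg (Om_e1 (σ := σ))) (coord_ne_zero T hg h6) h1 h3
  rw [← vec_mul] at h
  have hb : ee 6 ᵥ* (gB τ b : Matrix (Fin 7) (Fin 7) F) = ee 6 := by
    rw [ee_vecMul, coe_gB]; ext i; fin_cases i <;> simp [bP, ee]
  have h7 : ee 6 ᵥ* ((g * gB τ b : GL (Fin 7) F) : Matrix (Fin 7) (Fin 7) F) = n • ee 6 := by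
    rw [vec_mul, h6, Matrix.smul_vecMul, hb]
  obtain ⟨l, hl, -⟩ := eq_gH T (mul_mem hg (gB_mem T b)) h h7
  have hg' : g = gH τ l * (phi T.h3 τ (sU b))⁻¹ := by
    rw [← hl, phi_sU, mul_inv_cancel_right]
  obtain ⟨n, rfl | rfl⟩ := T.sq l
  · obtain ⟨M, hM⟩ := gH_sq_eq T n
    exact ⟨M * (sU b)⁻¹, Or.inl (by rw [hg', hM, map_mul, map_inv])⟩
  · obtain ⟨M, hM⟩ := gH_sq_eq T n
    refine ⟨M * (sU b)⁻¹, Or.inr ?_⟩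
    rw [hg', show (gH τ (-n ^ 2)) = j0 τ * gH τ (n ^ 2) by rw [j0, ← gH_mul]; simp, hM, map_mul,
      map_inv, mul_assoc]

theorem cent_all {m : ℕ} {τ σ : F →+* F} (T : Twist m τ σ) {g : GL (Fin 7) F}
    (hg : g ∈ ReeGroup (F := F) (3 ^ m)) (hc : g * j0 τ = j0 τ * g) :
    ∃ M, g = phi T.h3 τ M ∨ g = j0 τ * phi T.h3 τ M := by
  by_cases h0 : (ee 6 ᵥ* (g : Matrix (Fin 7) (Fin 7) F)) 0 = 0
  · exact cent_case T hg hc ((Om_mem T hg (Om_e7 (σ := σ))).zero_case h0)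
  · have hj : (ee 6 ᵥ* (g : Matrix (Fin 7) (Fin 7) F)) ᵥ* (j0 τ : Matrix (Fin 7) (Fin 7) F) =
        -(ee 6 ᵥ* (g : Matrix (Fin 7) (Fin 7) F)) := by
      rw [← vec_mul, hc, vec_mul, (ee_j0 τ).2, Matrix.neg_vecMul]
    obtain ⟨h1, h3⟩ := j0_entry τ _ T.h3 hj
    obtain ⟨b, h⟩ := exists_to_e1_even T (Om_mem T hg (Om_e7 (σ := σ))) h0 h1 h3
    set k := (ee 6 ᵥ* (g : Matrix (Fin 7) (Fin 7) F)) 0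
    have hB : gB τ b * gU = phi T.h3 τ (sU b * sW) := by rw [map_mul, phi_sU, phi_sW]
    have h7 : ee 6 ᵥ* ((g * phi T.h3 τ (sU b * sW) : GL (Fin 7) F) :
        Matrix (Fin 7) (Fin 7) F) = (-k) • ee 6 := by
      rw [← hB, ← mul_assoc, vec_mul, vec_mul, h, Matrix.smul_vecMul, e1_gU, smul_neg, neg_smul]
    obtain ⟨M, hM⟩ := cent_case T (mul_mem hg (phi_mem T (sU b * sW)))
      (by rw [mul_assoc, phi_comm, ← mul_assoc, hc, mul_assoc]) h7
    refine ⟨M * (sU b * sW)⁻¹, ?_⟩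
    rw [map_mul, map_inv]
    rcases hM with hM | hM
    · left; rw [← hM, mul_inv_cancel_right]
    · right; rw [← mul_assoc, ← hM, mul_inv_cancel_right]

theorem phi_center (h3 : (3 : F) = 0) (τ : F →+* F) {M : Matrix.SpecialLinearGroup (Fin 2) F}
    (hM : M ∈ Subgroup.center (Matrix.SpecialLinearGroup (Fin 2) F)) : phi h3 τ M = 1 := by
  obtain ⟨r, hr, h⟩ := Matrix.SpecialLinearGroup.mem_center_iff.mp hM
  simp at hr
  apply Units.ext
  rw [coe_phi, ← h, Units.val_one]
  rcases hr with rfl | rfl <;> ext i j <;> fin_cases i <;> fin_cases j <;> simp [phiM]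

theorem phi_ker (h3 : (3 : F) = 0) (τ : F →+* F) {M : Matrix.SpecialLinearGroup (Fin 2) F}
    (h : phi h3 τ M = 1 ∨ phi h3 τ M = j0 τ) :
    M ∈ Subgroup.center (Matrix.SpecialLinearGroup (Fin 2) F) := by
  have e : phiM M.1 (M.1.map τ) 1 1 = 1 ∧ phiM M.1 (M.1.map τ) 1 5 = 0 ∧
      phiM M.1 (M.1.map τ) 5 1 = 0 := by
    rw [← coe_phi h3]
    rcases h with h | h <;> rw [h]
    · simp
    · rw [coe_j0]; simp
  simp [phiM] at e
  obtain ⟨e1, e2, e3⟩ := e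
  have hdet := M.2
  rw [Matrix.det_fin_two, e2, zero_mul, sub_zero] at hdet
  rw [Matrix.SpecialLinearGroup.mem_center_iff]
  have hp : M.1 0 0 * M.1 0 0 = 1 := by
    apply τ.injective
    rw [map_mul, map_one]
    rcases e1 with e1 | e1 <;> rw [e1] <;> simp
  have hs : M.1 1 1 = M.1 0 0 := by
    linear_combination (M.1 0 0) * hdet - (M.1 1 1) * hp
  refine ⟨M.1 0 0, by simp [sq, hp], ?_⟩
  ext i j
  fin_cases i <;> fin_cases j <;> simp [e2, e3, hs]

theorem j0_ne_one (h3 : (3 : F) = 0) (τ : F →+* F) : j0 τ ≠ 1 := by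
  intro h
  have h2 : (j0 τ : Matrix (Fin 7) (Fin 7) F) 0 0 = 1 := by rw [h]; simp
  rw [coe_j0] at h2
  simp at h2
  have h1 : (1 : F) = 0 := by linear_combination h3 + h2
  exact one_ne_zero h1

end ReeAux

namespace ReeAux

variable {F : Type*} [Field F]

/-- The homomorphism from `PSL(2)` induced by `phi`. -/
def psi (h3 : (3 : F) = 0) (τ : F →+* F) :
    Matrix.ProjectiveSpecialLinearGroup (Fin 2) F →* GL (Fin 7) F :=
  QuotientGroup.lift (Subgroup.center (Matrix.SpecialLinearGroup (Fin 2) F)) (phi h3 τ)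
    (fun _ hM => phi_center h3 τ hM)

theorem psi_mk (h3 : (3 : F) = 0) (τ : F →+* F) (M : Matrix.SpecialLinearGroup (Fin 2) F) :
    psi h3 τ (QuotientGroup.mk M) = phi h3 τ M := rfl

/-- The homomorphism from the group of order two with image generated by `j0`. -/
def zhom (τ : F →+* F) : Multiplicative (ZMod 2) →* GL (Fin 7) F where
  toFun e := if e = 1 then 1 else j0 τ
  map_one' := by simp
  map_mul' := by
    have h2 : ∀ e : Multiplicative (ZMod 2), e = 1 ∨ e = Multiplicative.ofAdd 1 := by decide
    have h1 : (Multiplicative.ofAdd 1 : Multiplicative (ZMod 2)) ≠ 1 := by decide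
    have h4 : (Multiplicative.ofAdd 1 * Multiplicative.ofAdd 1 : Multiplicative (ZMod 2)) = 1 := by
      decide
    intro e f
    rcases h2 e with rfl | rfl <;> rcases h2 f with rfl | rfl <;> simp [h1, h4, j0_sq]

theorem zhom_apply (τ : F →+* F) (e : Multiplicative (ZMod 2)) :
    zhom τ e = if e = 1 then 1 else j0 τ := rfl

/-- The homomorphism whose range is the centralizer of `j0`. -/
def big (h3 : (3 : F) = 0) (τ : F →+* F) :
    Multiplicative (ZMod 2) × Matrix.ProjectiveSpecialLinearGroup (Fin 2) F →* GL (Fin 7) F :=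
  MonoidHom.noncommCoprod (zhom τ) (psi h3 τ) (by
    intro e M
    induction M using QuotientGroup.induction_on with
    | H M =>
      rw [psi_mk, zhom_apply]
      split_ifs
      · exact Commute.one_left _
      · exact (phi_comm h3 τ M).symm)

theorem big_apply (h3 : (3 : F) = 0) (τ : F →+* F) (e : Multiplicative (ZMod 2))
    (M : Matrix.SpecialLinearGroup (Fin 2) F) :
    big h3 τ (e, QuotientGroup.mk M) = (if e = 1 then 1 else j0 τ) * phi h3 τ M := rfl

theorem big_inj (h3 : (3 : F) = 0) (τ : F →+* F) : Function.Injective (big h3 τ) := by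
  rw [injective_iff_map_eq_one]
  rintro ⟨e, M⟩ h
  induction M using QuotientGroup.induction_on with
  | H M =>
    rw [big_apply] at h
    split_ifs at h with he
    · rw [one_mul] at h
      have := phi_ker h3 τ (Or.inl h)
      rw [he]
      exact Prod.ext rfl ((QuotientGroup.eq_one_iff M).mpr this)
    · exfalso
      have h1 : phi h3 τ M = j0 τ := by
        calc phi h3 τ M = (j0 τ * j0 τ) * phi h3 τ M := by rw [j0_sq, one_mul]
          _ = j0 τ := by rw [mul_assoc, h, mul_one]
      have h2 := phi_center h3 τ (phi_ker h3 τ (Or.inr h1))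
      exact j0_ne_one h3 τ (h1.symm.trans h2)

theorem big_range {m : ℕ} {τ σ : F →+* F} (T : Twist m τ σ) : (big T.h3 τ).range =
    ReeGroup (F := F) (3 ^ m) ⊓ Subgroup.centralizer {j0 τ} := by
  ext g
  rw [Subgroup.mem_inf, Subgroup.mem_centralizer_singleton_iff]
  constructor
  · rintro ⟨⟨e, M⟩, rfl⟩
    induction M using QuotientGroup.induction_on with
    | H M =>
      rw [big_apply]
      have hm := phi_mem T M
      have hc := phi_comm T.h3 τ M
      split_ifs
      · rw [one_mul]; exact ⟨hm, hc⟩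
      · exact ⟨mul_mem (gH_mem T (-1)) hm, by rw [mul_assoc, hc]⟩
  · rintro ⟨hg, hc⟩
    obtain ⟨M, h | h⟩ := cent_all T hg hc
    · exact ⟨(1, QuotientGroup.mk M), by rw [big_apply, h]; simp⟩
    · exact ⟨(Multiplicative.ofAdd 1, QuotientGroup.mk M), by
        rw [big_apply, h, if_neg (by decide)]⟩

/-- The isomorphism for the centralizer of `j0`. -/
theorem equiv_j0 {m : ℕ} {τ σ : F →+* F} (T : Twist m τ σ) :
    Nonempty (↥(ReeGroup (F := F) (3 ^ m) ⊓ Subgroup.centralizer {j0 τ}) ≃*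
        Multiplicative (ZMod 2) × Matrix.ProjectiveSpecialLinearGroup (Fin 2) F) :=
  ⟨((MonoidHom.ofInjective (big_inj T.h3 τ)).trans (MulEquiv.subgroupCongr (big_range T))).symm⟩

theorem equiv_j {m : ℕ} {τ σ : F →+* F} (T : Twist m τ σ) {j k : GL (Fin 7) F}
    (hk : k ∈ ReeGroup (F := F) (3 ^ m)) (h : k * j = j0 τ * k) :
    Nonempty (↥(ReeGroup (F := F) (3 ^ m) ⊓ Subgroup.centralizer {j}) ≃*
        Multiplicative (ZMod 2) × Matrix.ProjectiveSpecialLinearGroup (Fin 2) F) := by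
  obtain ⟨e⟩ := equiv_j0 T
  have hmap : (ReeGroup (F := F) (3 ^ m) ⊓ Subgroup.centralizer {j}).map
      (MulAut.conj k).toMonoidHom = ReeGroup (F := F) (3 ^ m) ⊓ Subgroup.centralizer {j0 τ} := by
    have hj : j0 τ = k * j * k⁻¹ := by rw [h, mul_inv_cancel_right]
    ext g
    simp only [Subgroup.mem_map, Subgroup.mem_inf, Subgroup.mem_centralizer_singleton_iff]
    constructor
    · rintro ⟨x, ⟨hx, hc⟩, rfl⟩
      refine ⟨mul_mem (mul_mem hk hx) (inv_mem hk), ?_⟩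
      change k * x * k⁻¹ * j0 τ = j0 τ * (k * x * k⁻¹)
      rw [hj]
      calc k * x * k⁻¹ * (k * j * k⁻¹) = k * (x * j) * k⁻¹ := by group
        _ = k * j * k⁻¹ * (k * x * k⁻¹) := by rw [hc]; group
    · rintro ⟨hg, hc⟩
      refine ⟨k⁻¹ * g * k, ⟨mul_mem (mul_mem (inv_mem hk) hg) hk, ?_⟩, ?_⟩
      · calc k⁻¹ * g * k * j = k⁻¹ * (g * (k * j * k⁻¹)) * k := by group
          _ = j * (k⁻¹ * g * k) := by rw [← hj, hc, hj]; group
      · change k * (k⁻¹ * g * k) * k⁻¹ = g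
        group
  exact ⟨((Subgroup.equivMapOfInjective _ _ (MulAut.conj k).injective).trans
    (MulEquiv.subgroupCongr hmap)).trans e⟩

theorem card_SL [Fintype F] : Nat.card (Matrix.SpecialLinearGroup (Fin 2) F) =
    Fintype.card F * (Fintype.card F ^ 2 - 1) := by
  classical
  have hGL := Matrix.card_GL_field (𝔽 := F) 2
  have hsurj : Function.Surjective (Matrix.GeneralLinearGroup.det : GL (Fin 2) F →* Fˣ) := by
    intro u
    refine ⟨Matrix.GeneralLinearGroup.mkOfDetNeZero !![(u : F), 0; 0, 1]
      (by simp [Matrix.det_fin_two]), ?_⟩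
    ext
    simp [Matrix.GeneralLinearGroup.mkOfDetNeZero, Matrix.det_fin_two]
  have hidx := Subgroup.card_mul_index (Matrix.GeneralLinearGroup.det : GL (Fin 2) F →* Fˣ).ker
  rw [Subgroup.index_ker, MonoidHom.range_eq_top.mpr hsurj, Subgroup.card_top] at hidx
  have hker : Nat.card (Matrix.GeneralLinearGroup.det : GL (Fin 2) F →* Fˣ).ker =
      Nat.card (Matrix.SpecialLinearGroup (Fin 2) F) := by
    refine (Nat.card_congr (Equiv.ofBijective (fun M : Matrix.SpecialLinearGroup (Fin 2) F =>
      (⟨(M : GL (Fin 2) F), ?_⟩ :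
        (Matrix.GeneralLinearGroup.det : GL (Fin 2) F →* Fˣ).ker)) ⟨?_, ?_⟩)).symm
    · rw [MonoidHom.mem_ker]; ext; simp
    · intro M N h
      have h1 := congrArg Units.val (Subtype.ext_iff.mp h)
      exact Subtype.ext h1
    · rintro ⟨g, hg⟩
      rw [MonoidHom.mem_ker] at hg
      exact ⟨⟨g, by simpa using congrArg Units.val hg⟩, Subtype.ext (Units.ext rfl)⟩
  rw [hker, hGL, Nat.card_eq_fintype_card (α := Fˣ), Fintype.card_units] at hidx
  simp only [Fin.prod_univ_two] at hidx
  have hq : 1 < Fintype.card F := Fintype.one_lt_card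
  generalize Fintype.card F = q at hidx hq
  have h1 : q ^ 2 - q = q * (q - 1) := by rw [Nat.mul_sub, sq, mul_one]
  apply Nat.eq_of_mul_eq_mul_right (Nat.sub_pos_of_lt hq)
  rw [hidx]
  simp [h1]
  ring

theorem card_center (h3 : (3 : F) = 0) :
    Nat.card (Subgroup.center (Matrix.SpecialLinearGroup (Fin 2) F)) = 2 := by
  have hne : (1 : F) ≠ -1 := by
    intro h
    have h1 : (1 : F) = 0 := by linear_combination h3 - h
    exact one_ne_zero h1
  have hset : ((Subgroup.center (Matrix.SpecialLinearGroup (Fin 2) F) :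
      Subgroup (Matrix.SpecialLinearGroup (Fin 2) F)) :
      Set (Matrix.SpecialLinearGroup (Fin 2) F)) = {1, -1} := by
    ext M
    simp only [SetLike.mem_coe, Matrix.SpecialLinearGroup.mem_center_iff, Set.mem_insert_iff,
      Set.mem_singleton_iff]
    constructor
    · rintro ⟨r, hr, h⟩
      simp at hr
      rcases hr with rfl | rfl
      · left; apply Subtype.ext; rw [← h]; simp
      · right; apply Subtype.ext; rw [← h, map_neg, map_one]; simp
    · rintro (rfl | rfl)
      · exact ⟨1, by simp, by simp⟩
      · exact ⟨-1, by simp, by rw [map_neg, map_one]; simp⟩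
  rw [← SetLike.coe_sort_coe, hset, Nat.card_coe_set_eq, Set.ncard_pair]
  intro h
  have := congrArg (fun M : Matrix.SpecialLinearGroup (Fin 2) F => M.1 0 0) h
  simp at this
  exact hne this

theorem card_PSL [Fintype F] (h3 : (3 : F) = 0) :
    Nat.card (Multiplicative (ZMod 2) × Matrix.ProjectiveSpecialLinearGroup (Fin 2) F) =
    Fintype.card F * (Fintype.card F ^ 2 - 1) := by
  rw [← card_SL, Nat.card_prod,
    Subgroup.card_eq_card_quotient_mul_card_subgroup
      (Subgroup.center (Matrix.SpecialLinearGroup (Fin 2) F)), card_center h3, mul_comm]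
  congr 1
  simp

end ReeAux

/-- The centralizer in `Ree(q)` of an involution is isomorphic to `(ℤ/2ℤ) × PSL(2, q)`
and has order `q(q^2 - 1)`. -/
theorem involution_centralizer (m : ℕ) (hm : 0 < m) (F : Type*) [Field F] [Fintype F]
    (hF : Fintype.card F = 3 ^ (2 * m + 1)) :
    ∀ j : GL (Fin 7) F, j ∈ ReeGroup (F := F) (3 ^ m) → orderOf j = 2 →
      Nonempty (↥(ReeGroup (F := F) (3 ^ m) ⊓ Subgroup.centralizer {j}) ≃*
        Multiplicative (ZMod 2) × Matrix.ProjectiveSpecialLinearGroup (Fin 2) F) ∧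
      Nat.card ↥(ReeGroup (F := F) (3 ^ m) ⊓ Subgroup.centralizer {j}) =
        3 ^ (2 * m + 1) * ((3 ^ (2 * m + 1)) ^ 2 - 1) := by
  intro j hj hord
  obtain ⟨τ, σ, T⟩ := ReeAux.exists_twist m hF
  have hjj : j * j = 1 := by
    rw [← sq, ← hord, pow_orderOf_eq_one]
  have hne : j ≠ 1 := by
    rintro rfl
    simp at hord
  obtain ⟨k, hk, h⟩ := ReeAux.conj_j0 T hj hjj hne
  obtain ⟨e⟩ := ReeAux.equiv_j T hk h
  refine ⟨⟨e⟩, ?_⟩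
  rw [Nat.card_congr e.toEquiv, ReeAux.card_PSL T.h3, hF]
end
end
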